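/- arXiv:1805.04682 — 2 statements merged into one kernel-verified Lean document; each statement's English description precedes it below -/
import Mathlib

section
/- Let (M, ρ, μ) be a metric measure space satisfying the doubling condition of dimension d with constant c₀' ≥ 1 and the non-collapsing condition with constant c₃ > 0. Let 0 < δ ≤ 1 and let K : M × M → ℝ be a measurable symmetric kernel with |K(x, y)| ≤ c_K μ(B(x, δ))^{−1} (1 + ρ(x, y)/δ)^{−(d+1)} for all x, y ∈ M. Then for every 2 ≤ p < ∞ and every pdf f on M: (a) (∫_M ∫_M |K(x, u)|^p f(u) dμ(u) dμ(x))^{1/p} ≤ c⋆ δ^{−d(1 − 1/p)}, and (b) (∫_M (∫_M |K(x, u)|² f(u) dμ(u))^{p/2} dμ(x))^{1/p} ≤ c⋆ δ^{−d/2} ‖f‖_{p/2}^{1/2}, where c⋆ > 0 depends only on c_K, d, c₀', c₃ and is independent of p. -/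
/-!
Writing `k x u = |K x u|`, everything follows from a uniform bound `k ≤ A` with `A ≲ δ ^ (-d)` and
a uniform bound `∫ k x u dμ(x) ≤ E` on the marginals.  The first comes from non-collapsing and
doubling, which give `μ (B(x, δ)) ≳ δ ^ d` (`inv_ball_le`); the second from splitting `M` into dyadic
annuli around `u`, on which the decay `(1 + ρ/δ) ^ (-(d+1))` beats the doubling growth by a factor
`2 ^ (-j)` (`lintegral_decay_le`).

Given these, (a) is `k ^ p ≤ A ^ (p - 1) * k` together with Tonelli, and for (b), with `q = p / 2`,
Hölder's inequality for the measure `k(x, ·)² dμ` gives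
`(∫ k² f) ^ q ≤ (∫ k²) ^ (q - 1) * ∫ k² f ^ q ≤ (A E) ^ (q - 1) * ∫ k² f ^ q`; integrate in `x`.

Tonelli requires σ-finiteness of `μ`.  It holds if balls of radius `δ` have finite measure; otherwise
doubling forces every ball of radius `δ` to have infinite measure, so that the kernel vanishes.
-/

open MeasureTheory Metric Set
open scoped ENNReal

/-! ### Integral bounds for bounded kernels with bounded marginals -/

section Kernel

variable {M : Type} [MeasurableSpace M] {μ : Measure M} {k : M → M → ℝ≥0∞} {g : M → ℝ≥0∞}
  {A E : ℝ≥0∞}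

lemma lintegral_kernel_rpow_le [SFinite μ] (hk : Measurable (fun z : M × M => k z.1 z.2))
    (hg : Measurable g) (hA : ∀ x u, k x u ≤ A) (hE : ∀ u, ∫⁻ x, k x u ∂μ ≤ E)
    {p : ℝ} (hp : 1 ≤ p) :
    ∫⁻ x, ∫⁻ u, k x u ^ p * g u ∂μ ∂μ ≤ A ^ (p - 1) * E * ∫⁻ u, g u ∂μ := by
  have hku : ∀ u, Measurable (fun x => k x u) := fun u => hk.comp measurable_prodMk_right
  have hkp : ∀ x u, k x u ^ p ≤ A ^ (p - 1) * k x u := by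
    intro x u
    calc k x u ^ p = k x u ^ (p - 1) * k x u ^ (1 : ℝ) := by
          rw [← ENNReal.rpow_add_of_nonneg _ _ (by linarith) (by norm_num)]; congr 1; ring
      _ ≤ A ^ (p - 1) * k x u := by
          rw [ENNReal.rpow_one]
          gcongr
          exact hA x u
  rw [lintegral_lintegral_swap (by
    have := (hk.pow_const p).mul (hg.comp measurable_snd)
    exact this.aemeasurable)]
  calc ∫⁻ u, ∫⁻ x, k x u ^ p * g u ∂μ ∂μ
      ≤ ∫⁻ u, (A ^ (p - 1) * E) * g u ∂μ := by
        refine lintegral_mono fun u => ?_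
        rw [lintegral_mul_const _ ((hku u).pow_const p)]
        gcongr
        calc ∫⁻ x, k x u ^ p ∂μ ≤ ∫⁻ x, A ^ (p - 1) * k x u ∂μ := lintegral_mono fun x => hkp x u
          _ = A ^ (p - 1) * ∫⁻ x, k x u ∂μ := lintegral_const_mul _ (hku u)
          _ ≤ _ := by gcongr; exact hE u
    _ = _ := lintegral_const_mul _ hg

/-- Hölder's inequality for `g` against the weight `w`, i.e. Jensen's inequality for a measure
`w dμ` of arbitrary mass. -/
lemma lintegral_weight_mul_rpow_le {w : M → ℝ≥0∞} (hw : Measurable w) (hg : Measurable g)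
    {q : ℝ} (hq : 1 ≤ q) :
    (∫⁻ u, w u * g u ∂μ) ^ q ≤ (∫⁻ u, w u ∂μ) ^ (q - 1) * ∫⁻ u, w u * g u ^ q ∂μ := by
  have hq0 : 0 < q := by linarith
  have h1 : 0 ≤ 1 - 1 / q := by
    rw [sub_nonneg, div_le_one hq0]; exact hq
  have h2 : 0 ≤ 1 / q := by positivity
  have key := ENNReal.lintegral_mul_norm_pow_le (μ := μ) hw.aemeasurable
    (hw.mul (hg.pow_const q)).aemeasurable h1 h2 (by ring)
  have e : ∀ u, w u ^ (1 - 1 / q) * (w u * g u ^ q) ^ (1 / q) = w u * g u := by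
    intro u
    rw [ENNReal.mul_rpow_of_nonneg _ _ h2, ← ENNReal.rpow_mul, mul_one_div_cancel hq0.ne',
      ENNReal.rpow_one, ← mul_assoc, ← ENNReal.rpow_add_of_nonneg _ _ h1 h2, sub_add_cancel,
      ENNReal.rpow_one]
  simp only [Pi.mul_apply, e] at key
  calc (∫⁻ u, w u * g u ∂μ) ^ q
      ≤ ((∫⁻ u, w u ∂μ) ^ (1 - 1 / q) * (∫⁻ u, w u * g u ^ q ∂μ) ^ (1 / q)) ^ q := by
        gcongr
    _ = _ := by
        rw [ENNReal.mul_rpow_of_nonneg _ _ hq0.le, ← ENNReal.rpow_mul, ← ENNReal.rpow_mul,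
          one_div_mul_cancel hq0.ne', ENNReal.rpow_one, sub_mul, one_div_mul_cancel hq0.ne',
          one_mul]

lemma lintegral_lintegral_kernel_sq_rpow_le [SFinite μ]
    (hk : Measurable (fun z : M × M => k z.1 z.2))
    (hs : ∀ x u, k x u = k u x)
    (hg : Measurable g) (hA : ∀ x u, k x u ≤ A) (hE : ∀ u, ∫⁻ x, k x u ∂μ ≤ E)
    {q : ℝ} (hq : 1 ≤ q) :
    ∫⁻ x, (∫⁻ u, k x u ^ 2 * g u ∂μ) ^ q ∂μ ≤ (A * E) ^ q * ∫⁻ u, g u ^ q ∂μ := by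
  have hkx : ∀ x, Measurable (fun u => k x u) := fun x => hk.comp measurable_prodMk_left
  have hsq : ∀ x, ∫⁻ u, k x u ^ 2 ∂μ ≤ A * E := by
    intro x
    calc ∫⁻ u, k x u ^ 2 ∂μ ≤ ∫⁻ u, A * k x u ∂μ := by
          refine lintegral_mono fun u => ?_
          rw [sq]
          gcongr
          exact hA x u
      _ = A * ∫⁻ u, k u x ∂μ := by
          rw [lintegral_const_mul _ (hkx x)]
          simp_rw [hs x]
      _ ≤ A * E := by gcongr; exact hE x
  have hm : Measurable (fun z : M × M => k z.1 z.2 ^ (2 : ℝ) * g z.2 ^ q) :=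
    (hk.pow_const _).mul ((hg.comp measurable_snd).pow_const q)
  calc ∫⁻ x, (∫⁻ u, k x u ^ 2 * g u ∂μ) ^ q ∂μ
      ≤ ∫⁻ x, (A * E) ^ (q - 1) * ∫⁻ u, k x u ^ (2 : ℝ) * g u ^ q ∂μ ∂μ := by
        refine lintegral_mono fun x => ?_
        refine (lintegral_weight_mul_rpow_le ((hkx x).pow_const 2) hg hq).trans ?_
        simp only [ENNReal.rpow_two]
        gcongr
        exact hsq x
    _ = (A * E) ^ (q - 1) * ∫⁻ x, ∫⁻ u, k x u ^ (2 : ℝ) * g u ^ q ∂μ ∂μ :=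
        lintegral_const_mul _ hm.lintegral_prod_right'
    _ ≤ (A * E) ^ (q - 1) * (A ^ ((2 : ℝ) - 1) * E * ∫⁻ u, g u ^ q ∂μ) := by
        gcongr
        exact lintegral_kernel_rpow_le hk (hg.pow_const q) hA hE (by norm_num)
    _ = (A * E) ^ q * ∫⁻ u, g u ^ q ∂μ := by
        have : (A * E) ^ q = (A * E) ^ (q - 1) * (A * E) := by
          nth_rewrite 3 [← ENNReal.rpow_one (A * E)]
          rw [← ENNReal.rpow_add_of_nonneg _ _ (by linarith) (by norm_num), sub_add_cancel]
        rw [this, show (2 : ℝ) - 1 = 1 by norm_num, ENNReal.rpow_one]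
        ring

end Kernel

/-! ### Consequences of doubling and non-collapsing -/

section Doubling

variable {M : Type} [MetricSpace M] [MeasurableSpace M] {μ : Measure M} {c₀' d c₃ δ : ℝ}

/-- The doubling inequality also holds for dilation factor `1`, because `1 ≤ c₀'`. -/
lemma doubling_of_one_le (hc₀' : 1 ≤ c₀')
    (hdoub : ∀ (x : M) (r l : ℝ), 0 < r → 1 < l →
        μ (ball x (l * r)) ≤ ENNReal.ofReal (c₀' * l ^ d) * μ (ball x r))
    (x : M) {r l : ℝ} (hr : 0 < r) (hl : 1 ≤ l) :
    μ (ball x (l * r)) ≤ ENNReal.ofReal (c₀' * l ^ d) * μ (ball x r) := by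
  rcases hl.eq_or_lt with rfl | hl
  · rw [one_mul, Real.one_rpow, mul_one]
    exact le_mul_of_one_le_left (zero_le) (by simpa using hc₀')
  · exact hdoub x r l hr hl

lemma inv_ball_le (hc₀' : 1 ≤ c₀') (hc₃ : 0 < c₃)
    (hdoub : ∀ (x : M) (r l : ℝ), 0 < r → 1 < l →
        μ (ball x (l * r)) ≤ ENNReal.ofReal (c₀' * l ^ d) * μ (ball x r))
    (hnc : ∀ x : M, ENNReal.ofReal c₃ ≤ μ (ball x 1)) (hδ : 0 < δ) (hδ1 : δ ≤ 1) (x : M) :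
    (μ (ball x δ))⁻¹ ≤ ENNReal.ofReal (c₀' / c₃ * δ ^ (-d)) := by
  have h0 : 0 < c₀' := by linarith
  have h1 := doubling_of_one_le hc₀' hdoub x hδ ((one_le_inv₀ hδ).2 hδ1)
  rw [inv_mul_cancel₀ hδ.ne', Real.inv_rpow hδ.le, ← Real.rpow_neg hδ.le] at h1
  have hb : 0 < c₀' * δ ^ (-d) := by positivity
  have h2 : ENNReal.ofReal (c₃ / (c₀' * δ ^ (-d))) ≤ μ (ball x δ) := by
    rw [ENNReal.ofReal_div_of_pos hb]
    exact ENNReal.div_le_of_le_mul' ((hnc x).trans h1)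
  have h3 := ENNReal.inv_le_inv.2 h2
  rw [← ENNReal.ofReal_inv_of_pos (by positivity)] at h3
  convert h3 using 2
  field_simp

/-- Majorization of the decay profile by a step function with jumps at the dyadic radii. -/
lemma decay_le_tsum (hd : 0 < d) {t : ℝ} (ht : 0 ≤ t) :
    ENNReal.ofReal ((1 + t) ^ (-(d + 1))) ≤
      ∑' j : ℕ, if t < 2 ^ j then ENNReal.ofReal (2 ^ (d + 1) * ((2 : ℝ) ^ j) ^ (-(d + 1))) else 0 := by
  have hex : ∃ j : ℕ, t < 2 ^ j ∧ (2 : ℝ) ^ j / 2 ≤ 1 + t := by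
    obtain ⟨n, hn1, hn2⟩ := exists_nat_pow_near (x := 1 + t) (y := 2) (by linarith) (by norm_num)
    refine ⟨n + 1, by linarith, ?_⟩
    rw [pow_succ]; linarith
  obtain ⟨j, hj1, hj2⟩ := hex
  refine le_trans ?_ (ENNReal.le_tsum j)
  rw [if_pos hj1]
  apply ENNReal.ofReal_le_ofReal
  have h2 : (0 : ℝ) < 2 ^ j := by positivity
  calc (1 + t) ^ (-(d + 1)) ≤ ((2 : ℝ) ^ j / 2) ^ (-(d + 1)) :=
        Real.rpow_le_rpow_of_nonpos (by positivity) hj2 (by linarith)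
    _ = _ := by
        rw [Real.div_rpow h2.le (by norm_num), Real.rpow_neg (x := 2) (by norm_num)]
        field_simp

lemma lintegral_decay_le [BorelSpace M] (hc₀' : 1 ≤ c₀') (hd : 0 < d)
    (hdoub : ∀ (x : M) (r l : ℝ), 0 < r → 1 < l →
        μ (ball x (l * r)) ≤ ENNReal.ofReal (c₀' * l ^ d) * μ (ball x r))
    (hδ : 0 < δ) (u : M) :
    ∫⁻ x, ENNReal.ofReal ((1 + dist u x / δ) ^ (-(d + 1))) ∂μ ≤
      ENNReal.ofReal (2 ^ (d + 1) * c₀' * 2) * μ (ball u δ) := by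
  have h0 : 0 < c₀' := by linarith
  set w : ℕ → ℝ := fun j => 2 ^ (d + 1) * ((2 : ℝ) ^ j) ^ (-(d + 1)) with hw
  have hterm : ∀ j : ℕ, ENNReal.ofReal (w j) * μ (ball u (2 ^ j * δ)) ≤
      ENNReal.ofReal (2 ^ (d + 1) * c₀' * (1 / 2) ^ j) * μ (ball u δ) := by
    intro j
    have h2 : (0 : ℝ) < 2 ^ j := by positivity
    refine (mul_le_mul_right (doubling_of_one_le hc₀' hdoub u hδ
      (one_le_pow₀ (by norm_num : (1 : ℝ) ≤ 2))) _).trans ?_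
    rw [← mul_assoc, ← ENNReal.ofReal_mul (by positivity)]
    apply le_of_eq
    congr 2
    -- the decay exponent exceeds the doubling exponent by one, leaving `2 ^ (-j)`
    have : ((2 : ℝ) ^ j) ^ (-(d + 1)) * ((2 : ℝ) ^ j) ^ d = (1 / 2) ^ j := by
      rw [← Real.rpow_add h2, show -(d + 1) + d = -1 by ring, Real.rpow_neg_one, one_div, inv_pow]
    rw [← this, hw]
    ring
  calc ∫⁻ x, ENNReal.ofReal ((1 + dist u x / δ) ^ (-(d + 1))) ∂μ
      ≤ ∫⁻ x, ∑' j : ℕ, (ball u (2 ^ j * δ)).indicator (fun _ => ENNReal.ofReal (w j)) x ∂μ := by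
        refine lintegral_mono fun x => ?_
        refine (decay_le_tsum hd (by positivity)).trans (le_of_eq ?_)
        refine tsum_congr fun j => ?_
        simp only [indicator, mem_ball, div_lt_iff₀ hδ, dist_comm u x, hw]
    _ = ∑' j : ℕ, ENNReal.ofReal (w j) * μ (ball u (2 ^ j * δ)) := by
        rw [lintegral_tsum fun j => (measurable_const.indicator measurableSet_ball).aemeasurable]
        simp_rw [lintegral_indicator_const measurableSet_ball]
    _ ≤ ∑' j : ℕ, ENNReal.ofReal (2 ^ (d + 1) * c₀' * (1 / 2) ^ j) * μ (ball u δ) :=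
        ENNReal.tsum_le_tsum hterm
    _ = _ := by
        rw [ENNReal.tsum_mul_right, ← ENNReal.ofReal_tsum_of_nonneg (fun j => by positivity)
          (summable_geometric_two.mul_left _), tsum_mul_left, tsum_geometric_two]

/-- Doubling propagates the infinite measure of one ball to all balls of the same radius. -/
lemma ball_eq_top_of_ball_eq_top (hc₀' : 1 ≤ c₀')
    (hdoub : ∀ (x : M) (r l : ℝ), 0 < r → 1 < l →
        μ (ball x (l * r)) ≤ ENNReal.ofReal (c₀' * l ^ d) * μ (ball x r))
    (hδ : 0 < δ) {x : M} (hx : μ (ball x δ) = ∞) (y : M) : μ (ball y δ) = ∞ := by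
  by_contra hy
  have h1 := doubling_of_one_le hc₀' hdoub y hδ (l := 1 + dist x y / δ)
    (le_add_of_nonneg_right (by positivity))
  have h2 : ball x δ ⊆ ball y ((1 + dist x y / δ) * δ) := by
    apply ball_subset_ball'
    rw [add_mul, one_mul, div_mul_cancel₀ _ hδ.ne']
  have h3 := (measure_mono h2).trans h1
  rw [hx] at h3
  exact (ENNReal.mul_lt_top ENNReal.ofReal_lt_top (lt_top_iff_ne_top.2 hy)).ne (top_le_iff.1 h3)

lemma sigmaFinite_of_ball_ne_top (hc₀' : 1 ≤ c₀')
    (hdoub : ∀ (x : M) (r l : ℝ), 0 < r → 1 < l →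
        μ (ball x (l * r)) ≤ ENNReal.ofReal (c₀' * l ^ d) * μ (ball x r))
    (hδ : 0 < δ) (x : M) (hx : μ (ball x δ) ≠ ∞) : SigmaFinite μ := by
  refine ⟨⟨⟨fun n : ℕ => ball x ((1 + n) * δ), fun _ => mem_univ _, fun n => ?_, ?_⟩⟩⟩
  · exact (doubling_of_one_le hc₀' hdoub x hδ (le_add_of_nonneg_right n.cast_nonneg)).trans_lt
      (ENNReal.mul_lt_top ENNReal.ofReal_lt_top (lt_top_iff_ne_top.2 hx))
  · refine eq_univ_of_forall fun y => ?_
    obtain ⟨n, hn⟩ := exists_nat_gt (dist y x / δ)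
    refine mem_iUnion.2 ⟨n, ?_⟩
    rw [div_lt_iff₀ hδ] at hn
    rw [mem_ball, add_mul]
    linarith

end Doubling

/-! ### The kernel density bounds -/

/-- In a doubling (dimension `d`, constant `c₀' ≥ 1`) and
non-collapsing (constant `c₃ > 0`) metric measure space, if `0 < δ ≤ 1` and `K` is a
measurable symmetric kernel with `|K(x,y)| ≤ c_K μ(B(x,δ))⁻¹ (1 + ρ(x,y)/δ)^{-(d+1)}`,
then for all `2 ≤ p < ∞` and every pdf `f`:
(a) `(∫∫ |K(x,u)|^p f(u) dμ(u) dμ(x))^{1/p} ≤ c⋆ δ^{-d(1-1/p)}`;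
(b) `(∫ (∫ |K(x,u)|² f(u) dμ(u))^{p/2} dμ(x))^{1/p} ≤ c⋆ δ^{-d/2} ‖f‖_{p/2}^{1/2}`,
with `c⋆ > 0` depending only on `c_K, d, c₀', c₃` and independent of `p`. -/
theorem kernel_density_prep_bounds
    (cK c₀' c₃ d : ℝ) (hcK : 0 < cK) (hc₀' : 1 ≤ c₀') (hc₃ : 0 < c₃) (hd : 0 < d) :
    ∃ cstar > (0 : ℝ),
      ∀ (M : Type) [MetricSpace M] [MeasurableSpace M] [BorelSpace M] (μ : Measure M),
      (∀ (x : M) (r l : ℝ), 0 < r → 1 < l →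
        μ (ball x (l * r)) ≤ ENNReal.ofReal (c₀' * l ^ d) * μ (ball x r)) →
      (∀ x : M, ENNReal.ofReal c₃ ≤ μ (ball x 1)) →
      ∀ (δ : ℝ), 0 < δ → δ ≤ 1 →
      ∀ (K : M → M → ℝ), Measurable (fun z : M × M => K z.1 z.2) →
        (∀ x y, K x y = K y x) →
        (∀ x y, ENNReal.ofReal |K x y| ≤
          ENNReal.ofReal cK * (μ (ball x δ))⁻¹ *
            ENNReal.ofReal ((1 + dist x y / δ) ^ (-(d + 1)))) →
      ∀ (p : ℝ), 2 ≤ p →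
      ∀ (f : M → ℝ), Measurable f → (∀ x, 0 ≤ f x) →
        (∫⁻ x, ENNReal.ofReal (f x) ∂μ) = 1 →
        (∫⁻ x, ∫⁻ u, ENNReal.ofReal (|K x u| ^ p * f u) ∂μ ∂μ) ^ (1 / p) ≤
            ENNReal.ofReal (cstar * δ ^ (-(d * (1 - 1 / p)))) ∧
          (∫⁻ x, (∫⁻ u, ENNReal.ofReal (K x u ^ 2 * f u) ∂μ) ^ (p / 2) ∂μ) ^ (1 / p) ≤
            ENNReal.ofReal (cstar * δ ^ (-(d / 2))) *
              eLpNorm f (ENNReal.ofReal (p / 2)) μ ^ ((1 : ℝ) / 2) := by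
  set D : ℝ := cK * (c₀' / c₃) with hD
  set E : ℝ := cK * (2 ^ (d + 1) * c₀' * 2) with hE
  have h0 : 0 < c₀' := by linarith
  have hDpos : 0 < D := by positivity
  have hEpos : 0 < E := by positivity
  refine ⟨(1 + D) * (1 + E), by positivity, ?_⟩
  intro M _ _ _ μ hdoub hnc δ hδ hδ1 K hKm hKs hKb p hp f hf hf0 hf1
  have hp0 : 0 < p := by linarith
  have hpinv : 1 / p ≤ 1 := by rw [div_le_one hp0]; linarith
  have hpinv0 : 0 ≤ 1 / p := by positivity
  by_cases htop : ∃ x, μ (ball x δ) = ∞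
  · obtain ⟨x₀, hx₀⟩ := htop
    have hK0 : ∀ x y, K x y = 0 := by
      intro x y
      have := hKb x y
      rw [ball_eq_top_of_ball_eq_top hc₀' hdoub hδ hx₀ x] at this
      simpa using this
    have hp2 : 0 < p / 2 := by positivity
    simp [hK0, Real.zero_rpow hp0.ne', hp0, hp2]
  push Not at htop
  obtain hM | ⟨⟨x₀⟩⟩ := isEmpty_or_nonempty M
  · simp [lintegral_of_isEmpty] at hf1
  have hsf : SigmaFinite μ := sigmaFinite_of_ball_ne_top hc₀' hdoub hδ x₀ (htop x₀)
  set k : M → M → ℝ≥0∞ := fun x u => ENNReal.ofReal |K x u| with hk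
  set g : M → ℝ≥0∞ := fun u => ENNReal.ofReal (f u) with hgdef
  have hkm : Measurable (fun z : M × M => k z.1 z.2) := by
    have : Measurable (fun z : M × M => |K z.1 z.2|) := hKm.abs
    exact this.ennreal_ofReal
  have hgm : Measurable g := hf.ennreal_ofReal
  have hks : ∀ x u, k x u = k u x := fun x u => by simp only [hk, hKs x u]
  have hAk : ∀ x u, k x u ≤ ENNReal.ofReal (D * δ ^ (-d)) := by
    intro x u
    have hle : (1 + dist x u / δ) ^ (-(d + 1)) ≤ 1 :=
      Real.rpow_le_one_of_one_le_of_nonpos (le_add_of_nonneg_right (by positivity)) (by linarith)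
    calc k x u ≤ _ := hKb x u
      _ ≤ ENNReal.ofReal cK * ENNReal.ofReal (c₀' / c₃ * δ ^ (-d)) * ENNReal.ofReal 1 := by
          gcongr
          exact inv_ball_le hc₀' hc₃ hdoub hnc hδ hδ1 x
      _ = _ := by
          rw [ENNReal.ofReal_one, mul_one, ← ENNReal.ofReal_mul hcK.le, hD, mul_assoc]
  have hEk : ∀ u, ∫⁻ x, k x u ∂μ ≤ ENNReal.ofReal E := by
    intro u
    have hm0 : μ (ball u δ) ≠ 0 := by
      intro h
      have := inv_ball_le hc₀' hc₃ hdoub hnc hδ hδ1 u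
      simp [h] at this
    calc ∫⁻ x, k x u ∂μ
        ≤ ∫⁻ x, ENNReal.ofReal cK * (μ (ball u δ))⁻¹ *
            ENNReal.ofReal ((1 + dist u x / δ) ^ (-(d + 1))) ∂μ :=
          -- symmetry moves the normalizing ball to the fixed centre `u`
          lintegral_mono fun x => (hks x u).trans_le (hKb u x)
      _ = ENNReal.ofReal cK * (μ (ball u δ))⁻¹ *
            ∫⁻ x, ENNReal.ofReal ((1 + dist u x / δ) ^ (-(d + 1))) ∂μ :=
          lintegral_const_mul' _ _ (ENNReal.mul_ne_top ENNReal.ofReal_ne_top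
            (ENNReal.inv_ne_top.2 hm0))
      _ ≤ ENNReal.ofReal cK * (μ (ball u δ))⁻¹ *
            (ENNReal.ofReal (2 ^ (d + 1) * c₀' * 2) * μ (ball u δ)) := by
          gcongr
          exact lintegral_decay_le hc₀' hd hdoub hδ u
      _ = ENNReal.ofReal cK * ENNReal.ofReal (2 ^ (d + 1) * c₀' * 2) *
            ((μ (ball u δ))⁻¹ * μ (ball u δ)) := by ring
      _ = ENNReal.ofReal E := by
          rw [ENNReal.inv_mul_cancel hm0 (htop u), mul_one, ← ENNReal.ofReal_mul hcK.le]
  have hδd : 0 < δ ^ (-d) := by positivity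
  have hApos : 0 < D * δ ^ (-d) := by positivity
  -- bounds by `1 + D` and `1 + E` absorb the dependence of the constants on `p`
  have hpow : ∀ {a s : ℝ}, 0 < a → 0 ≤ s → s ≤ 1 → a ^ s ≤ 1 + a := by
    intro a s ha hs0 hs1
    calc a ^ s ≤ (1 + a) ^ s := Real.rpow_le_rpow ha.le (by linarith) hs0
      _ ≤ (1 + a) ^ (1 : ℝ) := Real.rpow_le_rpow_of_exponent_le (by linarith) hs1
      _ = 1 + a := Real.rpow_one _
  constructor
  · have hint : ∀ x u, ENNReal.ofReal (|K x u| ^ p * f u) = k x u ^ p * g u := by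
      intro x u
      rw [ENNReal.ofReal_mul (by positivity), ← ENNReal.ofReal_rpow_of_nonneg (abs_nonneg _) hp0.le]
    simp_rw [hint]
    have key := lintegral_kernel_rpow_le hkm hgm hAk hEk (p := p) (by linarith)
    rw [hf1, mul_one, ENNReal.ofReal_rpow_of_pos hApos, ← ENNReal.ofReal_mul (by positivity)] at key
    refine (ENNReal.rpow_le_rpow key hpinv0).trans ?_
    rw [ENNReal.ofReal_rpow_of_pos (by positivity)]
    apply ENNReal.ofReal_le_ofReal
    rw [Real.mul_rpow (by positivity) (by positivity), ← Real.rpow_mul (by positivity),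
      Real.mul_rpow (by positivity) (by positivity), ← Real.rpow_mul hδ.le,
      show (p - 1) * (1 / p) = 1 - 1 / p by field_simp,
      show -d * (1 - 1 / p) = -(d * (1 - 1 / p)) by ring, mul_right_comm]
    gcongr
    · exact hpow hDpos (by linarith) (by linarith)
    · exact hpow hEpos hpinv0 hpinv
  · have hint : ∀ x u, ENNReal.ofReal (K x u ^ 2 * f u) = k x u ^ 2 * g u := by
      intro x u
      rw [ENNReal.ofReal_mul (by positivity), ← sq_abs, ENNReal.ofReal_pow (abs_nonneg _)]
    simp_rw [hint]
    have hq : 1 ≤ p / 2 := by linarith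
    have hq0 : 0 < p / 2 := by linarith
    have key := lintegral_lintegral_kernel_sq_rpow_le hkm hks hgm hAk hEk hq
    have hnorm : eLpNorm f (ENNReal.ofReal (p / 2)) μ = (∫⁻ u, g u ^ (p / 2) ∂μ) ^ (1 / (p / 2)) := by
      rw [eLpNorm_eq_lintegral_rpow_enorm_toReal (by simpa using hp0) ENNReal.ofReal_ne_top,
        ENNReal.toReal_ofReal hq0.le]
      simp_rw [Real.enorm_of_nonneg (hf0 _), hgdef]
    rw [hnorm, ← ENNReal.rpow_mul, show 1 / (p / 2) * (1 / 2) = 1 / p by field_simp]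
    refine (ENNReal.rpow_le_rpow key hpinv0).trans ?_
    rw [ENNReal.mul_rpow_of_nonneg _ _ hpinv0, ← ENNReal.rpow_mul,
      show p / 2 * (1 / p) = 1 / 2 by field_simp, ← ENNReal.ofReal_mul hApos.le,
      ENNReal.ofReal_rpow_of_pos (by positivity)]
    gcongr
    rw [Real.mul_rpow (by positivity) (by positivity),
      Real.mul_rpow (by positivity) (by positivity), ← Real.rpow_mul hδ.le,
      show -d * (1 / 2) = -(d / 2) by ring, mul_right_comm]
    gcongr
    · exact hpow hDpos (by norm_num) (by norm_num)
    · exact hpow hEpos (by norm_num) (by norm_num)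
end

section
/- Let B^m = {x ∈ ℝ^m : ‖x‖ < 1} be the open unit ball, let γ > −1/2, let μ be the measure on B^m with density (1 − ‖x‖²)^{γ − 1/2} with respect to Lebesgue measure, and define ρ(x, y) := arccos( ⟨x, y⟩ + (1 − ‖x‖²)^{1/2} (1 − ‖y‖²)^{1/2} ). Then there exists a constant c > 1, depending only on m and γ, such that for every x ∈ B^m and every 0 < r ≤ 1, c^{−1} r^m (1 − ‖x‖² + r²)^γ ≤ μ({y ∈ B^m : ρ(x, y) < r}) ≤ c r^m (1 − ‖x‖² + r²)^γ. In particular, for γ = 0 the measure with density (1 − ‖x‖²)^{−1/2} satisfies the Ahlfors condition μ({y : ρ(x, y) < r}) ∼ r^m. -/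
open MeasureTheory Set
open scoped ENNReal RealInnerProductSpace

/-- The weighted measure on the open unit ball of `ℝ^m` with density
`(1 - ‖x‖²)^{γ - 1/2}` with respect to Lebesgue measure. -/
noncomputable def weightedBallMeasure (m : ℕ) (γ : ℝ) :
    Measure (EuclideanSpace ℝ (Fin m)) :=
  (volume.restrict {x : EuclideanSpace ℝ (Fin m) | ‖x‖ < 1}).withDensity
    (fun x => ENNReal.ofReal ((1 - ‖x‖ ^ 2) ^ (γ - 1 / 2)))

/-- The distance `ρ(x,y) = arccos(⟨x,y⟩ + √(1-‖x‖²) √(1-‖y‖²))` on the unit ball. -/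
noncomputable def ballDist {m : ℕ} (x y : EuclideanSpace ℝ (Fin m)) : ℝ :=
  Real.arccos (⟪x, y⟫ + Real.sqrt (1 - ‖x‖ ^ 2) * Real.sqrt (1 - ‖y‖ ^ 2))

/-!
Lifting `x` to `(x, √(1 - ‖x‖²))` on the upper unit hemisphere turns `ρ` into the geodesic distance,
and `2 - 2 cos ρ(x, y)` is the squared chord `‖x - y‖² + (√(1 - ‖x‖²) - √(1 - ‖y‖²))²`. So for
`r ≤ 1` the `ρ`-ball is contained in the set where the chord is less than `r`, and contains the set
where it is at most `r / 2` (`chordSq_lt_of_ballDist_lt`, `ballDist_lt_of_chordSq_le`).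

Let `a = √(1 - ‖x‖²)`. If `‖x‖ ≥ 1 / 2`, these sets are, up to constants, truncated cones: the
direction of `y` is within a multiple of `r` of that of `x`, and the height `√(1 - ‖y‖²)` is within
a multiple of `r` of `a`. In polar coordinates (`setLIntegral_dirCone_inter`) the mass of a
truncated cone is the product of the measure of a spherical cap, of order `r ^ (m - 1)`
(`capMeasure_le`, `le_capMeasure`), and of a radial integral of `(1 - t²) ^ (γ - 1 / 2)`, of order
`r (a² + r²) ^ γ` (`lintegral_shell_le`, `le_lintegral_innerShell`). The cap is measured by
comparing the volume of a piece of the cone of thickness about `δ` with that of a Euclidean ball.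

If `‖x‖ < 1 / 2`, then `a² + r²` is bounded above and below, and the `ρ`-ball is compared with
Euclidean balls on which the weight is bounded above and below, except that for `r > 1 / 4` the
finite total mass serves as the upper bound. The hypothesis `γ > -1 / 2` enters through the
integrability of the weight at the boundary (`lintegral_tail_le`).
-/

/-- Powers of comparable positive numbers are comparable, whatever the sign of the exponent. -/
theorem rpow_le_of_comparable {u v K : ℝ} (p : ℝ) (hu : 0 < u) (hv : 0 < v) (hK : 1 ≤ K)
    (h1 : u ≤ K * v) (h2 : v ≤ K * u) : u ^ p ≤ K ^ |p| * v ^ p := by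
  have hK0 : 0 < K := by linarith
  rcases le_total 0 p with hp | hp
  · rw [abs_of_nonneg hp, ← Real.mul_rpow hK0.le hv.le]
    exact Real.rpow_le_rpow hu.le h1 hp
  · have h3 : v / K ≤ u := by rw [div_le_iff₀ hK0]; linarith
    calc u ^ p ≤ (v / K) ^ p := Real.rpow_le_rpow_of_nonpos (by positivity) h3 hp
      _ = K ^ |p| * v ^ p := by
        rw [abs_of_nonpos hp, Real.div_rpow hv.le hK0.le, Real.rpow_neg hK0.le]
        field_simp

/-! ### Cones and polar coordinates -/

/-- The cone of all `y` whose direction `y / ‖y‖` is at distance less than `δ` from `ω`. The origin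
belongs to it exactly when `‖ω‖ < δ`; being a null set, it plays no role. -/
def dirCone {m : ℕ} (ω : EuclideanSpace ℝ (Fin m)) (δ : ℝ) : Set (EuclideanSpace ℝ (Fin m)) :=
  {y | ‖‖y‖⁻¹ • y - ω‖ < δ}

/-- The surface measure of the spherical cap of all unit vectors at distance less than `δ`
from `ω`. -/
noncomputable def capMeasure {m : ℕ} (ω : EuclideanSpace ℝ (Fin m)) (δ : ℝ) : ℝ≥0∞ :=
  (volume : Measure (EuclideanSpace ℝ (Fin m))).toSphere
    {v | ‖(v : EuclideanSpace ℝ (Fin m)) - ω‖ < δ}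

theorem measurableSet_dirCone {m : ℕ} (ω : EuclideanSpace ℝ (Fin m)) (δ : ℝ) :
    MeasurableSet (dirCone ω δ) :=
  measurableSet_lt (by fun_prop) (by fun_prop)

/-- Integration of a radial function over a cone in polar coordinates. -/
theorem setLIntegral_dirCone_norm {m : ℕ} (hm : 1 ≤ m) (ω : EuclideanSpace ℝ (Fin m)) (δ : ℝ)
    {g : ℝ → ℝ≥0∞} (hg : Measurable g) :
    ∫⁻ y in dirCone ω δ, g ‖y‖ =
      capMeasure ω δ * ∫⁻ t in Ioi (0 : ℝ), ENNReal.ofReal (t ^ (m - 1)) * g t := by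
  have : Nonempty (Fin m) := ⟨⟨0, hm⟩⟩
  set A : Set (Metric.sphere (0 : EuclideanSpace ℝ (Fin m)) 1) :=
    {v | ‖(v : EuclideanSpace ℝ (Fin m)) - ω‖ < δ} with hA
  have hAm : MeasurableSet A := measurableSet_lt (by fun_prop) (by fun_prop)
  have hmp := (volume : Measure (EuclideanSpace ℝ (Fin m))).measurePreserving_homeomorphUnitSphereProd
  have key : ∀ y : ({0}ᶜ : Set (EuclideanSpace ℝ (Fin m))), (dirCone ω δ).indicator (fun y => g ‖y‖) (y : (EuclideanSpace ℝ (Fin m))) =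
      (fun z : Metric.sphere (0 : (EuclideanSpace ℝ (Fin m))) 1 × Ioi (0 : ℝ) => A.indicator 1 z.1 * g z.2)
        (homeomorphUnitSphereProd (EuclideanSpace ℝ (Fin m)) y) := by
    intro y
    have : (y : (EuclideanSpace ℝ (Fin m))) ∈ dirCone ω δ ↔ (homeomorphUnitSphereProd (EuclideanSpace ℝ (Fin m)) y).1 ∈ A := by
      change ‖‖(y : EuclideanSpace ℝ (Fin m))‖⁻¹ • (y : EuclideanSpace ℝ (Fin m)) - ω‖ < δ ↔ _
      simp [hA]
    by_cases h : (y : (EuclideanSpace ℝ (Fin m))) ∈ dirCone ω δ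
    · simp [h, this.1 h]
    · simp [h, mt this.2 h]
  have hgm : Measurable fun z : Ioi (0 : ℝ) => g z := hg.comp measurable_subtype_coe
  calc ∫⁻ y in dirCone ω δ, g ‖y‖
      = ∫⁻ y, (dirCone ω δ).indicator (fun y => g ‖y‖) y :=
        (lintegral_indicator (measurableSet_dirCone ω δ) _).symm
    _ = ∫⁻ y in ({0}ᶜ : Set (EuclideanSpace ℝ (Fin m))), (dirCone ω δ).indicator (fun y => g ‖y‖) y := by
        rw [restrict_compl_singleton]
    _ = ∫⁻ y : ({0}ᶜ : Set (EuclideanSpace ℝ (Fin m))), (dirCone ω δ).indicator (fun y => g ‖y‖) (y : (EuclideanSpace ℝ (Fin m)))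
          ∂(volume.comap Subtype.val) :=
        (lintegral_subtype_comap (measurableSet_singleton _).compl _).symm
    _ = ∫⁻ z, A.indicator 1 z.1 * g z.2 ∂((volume : Measure (EuclideanSpace ℝ (Fin m))).toSphere.prod
          (.volumeIoiPow (Module.finrank ℝ (EuclideanSpace ℝ (Fin m)) - 1))) := by
        simp_rw [key]
        exact hmp.lintegral_comp (f := fun z : Metric.sphere (0 : (EuclideanSpace ℝ (Fin m))) 1 × Ioi (0 : ℝ) =>
          A.indicator 1 z.1 * g z.2)
          (((measurable_one.indicator hAm).comp measurable_fst).mul (hgm.comp measurable_snd))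
    _ = capMeasure ω δ * ∫⁻ t, g t ∂(.volumeIoiPow (Module.finrank ℝ (EuclideanSpace ℝ (Fin m)) - 1)) := by
        rw [lintegral_prod_mul (f := A.indicator 1) (g := fun z : Ioi (0 : ℝ) => g z)
          (measurable_one.indicator hAm).aemeasurable hgm.aemeasurable,
          lintegral_indicator_one hAm, capMeasure]
    _ = _ := by
        rw [Measure.volumeIoiPow, lintegral_withDensity_eq_lintegral_mul _ (by fun_prop) hgm]
        congr 1
        rw [finrank_euclideanSpace_fin]
        exact lintegral_subtype_comap measurableSet_Ioi
          (fun t : ℝ => ENNReal.ofReal (t ^ (m - 1)) * g t)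

/-- The integral of a radial function over a truncated cone is the measure of the cap times a
radial integral. -/
theorem setLIntegral_dirCone_inter {m : ℕ} (hm : 1 ≤ m) (ω : EuclideanSpace ℝ (Fin m)) (δ : ℝ)
    {g : ℝ → ℝ≥0∞} (hg : Measurable g) {T : Set ℝ} (hT : MeasurableSet T) :
    ∫⁻ y in dirCone ω δ ∩ {y | ‖y‖ ∈ T}, g ‖y‖ =
      capMeasure ω δ * ∫⁻ t in T ∩ Ioi 0, ENNReal.ofReal (t ^ (m - 1)) * g t := by
  have h := setLIntegral_dirCone_norm hm ω δ (hg.indicator hT)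
  have h1 : ∫⁻ y in dirCone ω δ, T.indicator g ‖y‖ =
      ∫⁻ y in dirCone ω δ ∩ {y | ‖y‖ ∈ T}, g ‖y‖ := by
    have := setLIntegral_indicator (μ := volume) (t := dirCone ω δ) (measurable_norm hT)
      (fun y : EuclideanSpace ℝ (Fin m) => g ‖y‖)
    rw [inter_comm]
    exact this
  have h2 : ∫⁻ t in Ioi (0 : ℝ), ENNReal.ofReal (t ^ (m - 1)) * T.indicator g t =
      ∫⁻ t in T ∩ Ioi 0, ENNReal.ofReal (t ^ (m - 1)) * g t := by
    rw [← setLIntegral_indicator hT]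
    refine lintegral_congr fun t => ?_
    by_cases ht : t ∈ T <;> simp [ht]
  rw [← h1, h, h2]

/-! ### The measure of a spherical cap -/

/-- Normalization is Lipschitz with constant `2 / ‖x‖` at `x`, also for `y = 0`. -/
theorem norm_normalize_sub_le {E : Type*} [NormedAddCommGroup E] [NormedSpace ℝ E] (y x : E) :
    ‖x‖ * ‖‖y‖⁻¹ • y - ‖x‖⁻¹ • x‖ ≤ 2 * ‖x - y‖ := by
  rcases eq_or_ne x 0 with rfl | hx
  · simp
  have hx0 : 0 < ‖x‖ := norm_pos_iff.2 hx
  rcases eq_or_ne y 0 with rfl | hy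
  · simp [norm_smul, hx0.ne']
    linarith
  have hy0 : 0 < ‖y‖ := norm_pos_iff.2 hy
  have e : ‖x‖ • (‖y‖⁻¹ • y - ‖x‖⁻¹ • x) = (‖x‖ - ‖y‖) • (‖y‖⁻¹ • y) - (x - y) := by
    rw [smul_sub, sub_smul, smul_smul ‖x‖ ‖x‖⁻¹, smul_smul ‖y‖ ‖y‖⁻¹, mul_inv_cancel₀ hx0.ne',
      mul_inv_cancel₀ hy0.ne', one_smul, one_smul]
    abel
  calc ‖x‖ * ‖‖y‖⁻¹ • y - ‖x‖⁻¹ • x‖ = ‖‖x‖ • (‖y‖⁻¹ • y - ‖x‖⁻¹ • x)‖ := by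
        rw [norm_smul, norm_norm]
    _ ≤ ‖(‖x‖ - ‖y‖) • (‖y‖⁻¹ • y)‖ + ‖x - y‖ := by rw [e]; exact norm_sub_le _ _
    _ = |‖x‖ - ‖y‖| + ‖x - y‖ := by
        rw [norm_smul, norm_smul, norm_inv, norm_norm, inv_mul_cancel₀ hy0.ne', mul_one,
          Real.norm_eq_abs]
    _ ≤ 2 * ‖x - y‖ := by linarith [abs_norm_sub_norm_le x y]

theorem norm_sub_normalize {E : Type*} [NormedAddCommGroup E] [NormedSpace ℝ E] {y : E}
    (hy : y ≠ 0) : ‖y - ‖y‖⁻¹ • y‖ = |‖y‖ - 1| := by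
  have hy0 : 0 < ‖y‖ := norm_pos_iff.2 hy
  have e : y - ‖y‖⁻¹ • y = (‖y‖ - 1) • (‖y‖⁻¹ • y) := by
    rw [sub_smul, smul_smul ‖y‖ ‖y‖⁻¹, mul_inv_cancel₀ hy0.ne', one_smul, one_smul]
  rw [e, norm_smul, norm_smul, norm_inv, norm_norm, inv_mul_cancel₀ hy0.ne', mul_one,
          Real.norm_eq_abs]

theorem volume_ball_eq {m : ℕ} (x : EuclideanSpace ℝ (Fin m)) {s : ℝ} (hs : 0 < s) :
    volume (Metric.ball x s) =
      ENNReal.ofReal (volume.real (Metric.ball (0 : EuclideanSpace ℝ (Fin m)) 1) * s ^ m) := by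
  rw [Measure.addHaar_ball_of_pos _ _ hs, finrank_euclideanSpace_fin, mul_comm (volume.real _),
    ENNReal.ofReal_mul (by positivity), ofReal_measureReal]

theorem volume_real_ball_pos (m : ℕ) :
    0 < volume.real (Metric.ball (0 : EuclideanSpace ℝ (Fin m)) 1) :=
  ENNReal.toReal_pos (Metric.measure_ball_pos _ _ one_pos).ne' measure_ball_lt_top.ne

/-- The part of a cone between the radii `1` and `1 + δ` lies in a ball of radius `2 δ`;
comparing volumes bounds the cap from above. -/
theorem capMeasure_le {m : ℕ} (hm : 1 ≤ m) :
    ∃ C : ℝ, 0 < C ∧ ∀ (ω : EuclideanSpace ℝ (Fin m)) (δ : ℝ), 0 < δ →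
      capMeasure ω δ ≤ ENNReal.ofReal (C * δ ^ (m - 1)) := by
  set v := volume.real (Metric.ball (0 : EuclideanSpace ℝ (Fin m)) 1) with hv
  have hv0 : 0 < v := volume_real_ball_pos m
  refine ⟨v * 2 ^ m, by positivity, fun ω δ hδ => ?_⟩
  have hT0 : Ioo (1 : ℝ) (1 + δ) ⊆ Ioi 0 := fun t ht => by
    have := ht.1; simp only [mem_Ioi]; linarith
  have h := setLIntegral_dirCone_inter hm ω δ (g := 1) measurable_const
    (measurableSet_Ioo (a := (1 : ℝ)) (b := 1 + δ))
  rw [inter_eq_left.2 hT0] at h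
  have h1 : dirCone ω δ ∩ {y | ‖y‖ ∈ Ioo (1 : ℝ) (1 + δ)} ⊆ Metric.ball ω (2 * δ) := by
    rintro y ⟨hy, hy1, hy2⟩
    have hy0 : y ≠ 0 := by rintro rfl; simp at hy1; linarith
    have hy' : ‖‖y‖⁻¹ • y - ω‖ < δ := hy
    rw [Metric.mem_ball, dist_eq_norm]
    have h3 := norm_sub_normalize hy0
    rw [abs_of_pos (by linarith)] at h3
    have h4 := norm_sub_le_norm_sub_add_norm_sub y (‖y‖⁻¹ • y) ω
    linarith
  have h2 : ENNReal.ofReal δ ≤ ∫⁻ t in Ioo (1 : ℝ) (1 + δ), ENNReal.ofReal (t ^ (m - 1)) * 1 := by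
    calc ENNReal.ofReal δ = ∫⁻ t in Ioo (1 : ℝ) (1 + δ), 1 := by simp
      _ ≤ _ := by
        refine setLIntegral_mono' measurableSet_Ioo fun t ht => ?_
        rw [mul_one, ENNReal.one_le_ofReal]
        exact one_le_pow₀ ht.1.le
  have h3 : capMeasure ω δ * ENNReal.ofReal δ ≤
      ENNReal.ofReal (v * 2 ^ m * δ ^ (m - 1)) * ENNReal.ofReal δ := by
    calc capMeasure ω δ * ENNReal.ofReal δ
        ≤ capMeasure ω δ * ∫⁻ t in Ioo (1 : ℝ) (1 + δ), ENNReal.ofReal (t ^ (m - 1)) * 1 := by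
          gcongr
      _ = volume (dirCone ω δ ∩ {y | ‖y‖ ∈ Ioo (1 : ℝ) (1 + δ)}) := by
          rw [← setLIntegral_one]; exact h.symm
      _ ≤ volume (Metric.ball ω (2 * δ)) := measure_mono h1
      _ = _ := by
          rw [volume_ball_eq _ (by positivity), ← ENNReal.ofReal_mul (by positivity)]
          congr 1
          obtain ⟨k, rfl⟩ := Nat.exists_eq_add_of_le' hm
          simp only [Nat.add_sub_cancel]
          ring
  exact (ENNReal.mul_le_mul_iff_left (by simpa using hδ) ENNReal.ofReal_ne_top).1 h3

/-- The ball of radius `δ / 4` around `ω` lies in the part of the cone between the radii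
`1 - δ / 4` and `1 + δ / 4`; comparing volumes bounds the cap from below. -/
theorem le_capMeasure {m : ℕ} (hm : 1 ≤ m) :
    ∃ c : ℝ, 0 < c ∧ ∀ (ω : EuclideanSpace ℝ (Fin m)) (δ : ℝ), ‖ω‖ = 1 → 0 < δ → δ ≤ 1 →
      ENNReal.ofReal (c * δ ^ (m - 1)) ≤ capMeasure ω δ := by
  set v := volume.real (Metric.ball (0 : EuclideanSpace ℝ (Fin m)) 1) with hv
  have hv0 : 0 < v := volume_real_ball_pos m
  refine ⟨v * (1 / 4) ^ m * (2 * (1 / 2) ^ (m - 1)), by positivity, fun ω δ hω hδ hδ1 => ?_⟩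
  have hT0 : Ioo (1 - δ / 4) (1 + δ / 4) ⊆ Ioi 0 := fun t ht => by
    have := ht.1; simp only [mem_Ioi]; linarith
  have h := setLIntegral_dirCone_inter hm ω δ (g := 1) measurable_const
    (measurableSet_Ioo (a := 1 - δ / 4) (b := 1 + δ / 4))
  rw [inter_eq_left.2 hT0] at h
  have h1 : Metric.ball ω (δ / 4) ⊆ dirCone ω δ ∩ {y | ‖y‖ ∈ Ioo (1 - δ / 4) (1 + δ / 4)} := by
    intro y hy
    rw [Metric.mem_ball, dist_eq_norm] at hy
    have h3 := norm_normalize_sub_le y ω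
    rw [hω, one_mul, inv_one, one_smul, norm_sub_rev ω y] at h3
    have h4 := abs_le.1 (abs_norm_sub_norm_le y ω)
    rw [hω] at h4
    refine ⟨?_, ?_, ?_⟩
    · change ‖‖y‖⁻¹ • y - ω‖ < δ
      linarith
    · linarith
    · linarith
  have h2 : ∫⁻ t in Ioo (1 - δ / 4) (1 + δ / 4), ENNReal.ofReal (t ^ (m - 1)) * 1 ≤
      ENNReal.ofReal (2 ^ (m - 1) * (δ / 2)) := by
    calc _ ≤ ∫⁻ t in Ioo (1 - δ / 4) (1 + δ / 4), ENNReal.ofReal (2 ^ (m - 1)) := by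
          refine setLIntegral_mono' measurableSet_Ioo fun t ht => ?_
          rw [mul_one]
          have h1 := ht.1
          have h2 := ht.2
          exact ENNReal.ofReal_le_ofReal (pow_le_pow_left₀ (by linarith) (by linarith) _)
      _ = _ := by
          rw [setLIntegral_const, Real.volume_Ioo, ← ENNReal.ofReal_mul (by positivity)]
          congr 1; ring
  have h3 : ENNReal.ofReal (v * (δ / 4) ^ m) ≤
      capMeasure ω δ * ENNReal.ofReal (2 ^ (m - 1) * (δ / 2)) := by
    calc ENNReal.ofReal (v * (δ / 4) ^ m) = volume (Metric.ball ω (δ / 4)) :=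
          (volume_ball_eq _ (by positivity)).symm
      _ ≤ volume (dirCone ω δ ∩ {y | ‖y‖ ∈ Ioo (1 - δ / 4) (1 + δ / 4)}) := measure_mono h1
      _ = capMeasure ω δ * ∫⁻ t in Ioo (1 - δ / 4) (1 + δ / 4), ENNReal.ofReal (t ^ (m - 1)) * 1 := by
          rw [← setLIntegral_one]; exact h
      _ ≤ _ := by gcongr
  have h4 : (0 : ℝ) < 2 ^ (m - 1) * (δ / 2) := by positivity
  refine (ENNReal.mul_le_mul_iff_left (c := ENNReal.ofReal (2 ^ (m - 1) * (δ / 2)))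
    (by simpa using hδ) ENNReal.ofReal_ne_top).1 (le_trans (le_of_eq ?_) h3)
  rw [← ENNReal.ofReal_mul (by positivity)]
  congr 1
  obtain ⟨k, rfl⟩ := Nat.exists_eq_add_of_le' hm
  simp only [Nat.add_sub_cancel]
  have : ((1 : ℝ) / 2) ^ k * 2 ^ k = 1 := by rw [← mul_pow]; norm_num
  rw [show v * (δ / 4) ^ (k + 1) = v * δ ^ (k + 1) * (1 / 4) ^ (k + 1) by
    rw [mul_assoc, ← mul_pow]; ring]
  rw [show v * (1 / 4) ^ (k + 1) * (2 * (1 / 2) ^ k) * δ ^ k * (2 ^ k * (δ / 2)) =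
    v * δ ^ (k + 1) * (1 / 4) ^ (k + 1) * ((1 / 2) ^ k * 2 ^ k) by ring, this, mul_one]

theorem weightedBallMeasure_apply {m : ℕ} (γ : ℝ) {S : Set (EuclideanSpace ℝ (Fin m))}
    (hS : S ⊆ {y | ‖y‖ < 1}) :
    weightedBallMeasure m γ S =
      ∫⁻ y in S, ENNReal.ofReal ((1 - ‖y‖ ^ 2) ^ (γ - 1 / 2)) := by
  rw [weightedBallMeasure, withDensity_apply', Measure.restrict_restrict'
    (measurableSet_lt (by fun_prop) (by fun_prop)), inter_eq_left.2 hS]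

/-! ### The distance `ρ` and the chord on the hemisphere -/

/-- The squared chordal distance between the points `(x, √(1 - ‖x‖²))` and `(y, √(1 - ‖y‖²))` of
the upper unit hemisphere. -/
noncomputable def chordSq {m : ℕ} (x y : EuclideanSpace ℝ (Fin m)) : ℝ :=
  ‖x - y‖ ^ 2 + (√(1 - ‖x‖ ^ 2) - √(1 - ‖y‖ ^ 2)) ^ 2

theorem chordSq_eq {m : ℕ} {x y : EuclideanSpace ℝ (Fin m)} (hx : ‖x‖ < 1) (hy : ‖y‖ < 1) :
    chordSq x y = 2 - 2 * (⟪x, y⟫ + √(1 - ‖x‖ ^ 2) * √(1 - ‖y‖ ^ 2)) := by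
  have h1 : √(1 - ‖x‖ ^ 2) ^ 2 = 1 - ‖x‖ ^ 2 :=
    Real.sq_sqrt (by nlinarith [norm_nonneg x])
  have h2 : √(1 - ‖y‖ ^ 2) ^ 2 = 1 - ‖y‖ ^ 2 :=
    Real.sq_sqrt (by nlinarith [norm_nonneg y])
  rw [chordSq, norm_sub_sq_real]
  linear_combination h1 + h2

theorem chordSq_lt_of_ballDist_lt {m : ℕ} {x y : EuclideanSpace ℝ (Fin m)} (hx : ‖x‖ < 1)
    (hy : ‖y‖ < 1) {r : ℝ} (hr : 0 < r) (hr1 : r ≤ 1) (h : ballDist x y < r) :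
    chordSq x y < r ^ 2 := by
  rw [chordSq_eq hx hy]
  rw [ballDist] at h
  by_contra! hc
  have h1 := Real.one_sub_sq_div_two_le_cos (x := r)
  have h2 := Real.arccos_le_arccos (x := ⟪x, y⟫ + √(1 - ‖x‖ ^ 2) * √(1 - ‖y‖ ^ 2))
    (y := Real.cos r) (by linarith)
  rw [Real.arccos_cos hr.le (by linarith [Real.pi_gt_three])] at h2
  linarith

theorem ballDist_lt_of_chordSq_le {m : ℕ} {x y : EuclideanSpace ℝ (Fin m)} (hx : ‖x‖ < 1)
    (hy : ‖y‖ < 1) {r : ℝ} (hr : 0 < r) (hr1 : r ≤ 1) (h : chordSq x y ≤ r ^ 2 / 4) :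
    ballDist x y < r := by
  have h0 : 0 ≤ chordSq x y := by unfold chordSq; positivity
  rw [chordSq_eq hx hy] at h h0
  rw [ballDist]
  have h1 := (abs_le.1 (Real.cos_bound (x := r) (by rw [abs_of_pos hr]; exact hr1))).2
  rw [abs_of_pos hr] at h1
  have h4 : r ^ 4 ≤ r ^ 2 := pow_le_pow_of_le_one hr.le hr1 (by norm_num)
  have h5 : 0 < r ^ 2 := by positivity
  have h2 := Real.arccos_lt_arccos (Real.neg_one_le_cos r)
    (y := ⟪x, y⟫ + √(1 - ‖x‖ ^ 2) * √(1 - ‖y‖ ^ 2)) (by linarith) (by linarith)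
  rwa [Real.arccos_cos hr.le (by linarith [Real.pi_gt_three])] at h2

/-! ### Radial integrals of the weight -/

/-- The mass of the radial weight within `h` of the boundary; the exponent is integrable as
`p > -1`. -/
theorem lintegral_tail_le {p : ℝ} (hp : -1 < p) :
    ∃ C : ℝ, 0 < C ∧ ∀ h : ℝ, 0 < h →
      ∫⁻ t in {t : ℝ | 0 < t ∧ t < 1 ∧ 1 - t < h}, ENNReal.ofReal ((1 - t ^ 2) ^ p) ≤
        ENNReal.ofReal (C * h ^ (p + 1)) := by
  have hp1 : 0 < p + 1 := by linarith
  refine ⟨2 ^ |p| / (p + 1), by positivity, fun h hh => ?_⟩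
  have hms : MeasurableSet {t : ℝ | 0 < t ∧ t < 1 ∧ 1 - t < h} := by measurability
  have hInt : IntegrableOn (fun u : ℝ => 2 ^ |p| * u ^ p) (Ioc 0 h) :=
    ((intervalIntegral.intervalIntegrable_rpow' hp (a := 0) (b := h)).1).const_mul _
  calc ∫⁻ t in {t : ℝ | 0 < t ∧ t < 1 ∧ 1 - t < h}, ENNReal.ofReal ((1 - t ^ 2) ^ p)
      ≤ ∫⁻ t in {t : ℝ | 0 < t ∧ t < 1 ∧ 1 - t < h},
          (Ioc 0 h).indicator (fun u => ENNReal.ofReal (2 ^ |p| * u ^ p)) (1 - t) := by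
        refine setLIntegral_mono' hms fun t ht => ?_
        obtain ⟨h0, h1, h2⟩ := ht
        rw [indicator_of_mem (show 1 - t ∈ Ioc 0 h from ⟨by linarith, h2.le⟩)]
        exact ENNReal.ofReal_le_ofReal (rpow_le_of_comparable p (by nlinarith) (by linarith)
          (by norm_num) (by nlinarith) (by nlinarith))
    _ ≤ ∫⁻ t, (Ioc 0 h).indicator (fun u => ENNReal.ofReal (2 ^ |p| * u ^ p)) (1 - t) :=
        setLIntegral_le_lintegral _ _
    _ = ∫⁻ u in Ioc 0 h, ENNReal.ofReal (2 ^ |p| * u ^ p) := by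
        rw [lintegral_sub_left_eq_self
          ((Ioc 0 h).indicator (fun u => ENNReal.ofReal (2 ^ |p| * u ^ p))) 1,
          lintegral_indicator measurableSet_Ioc]
    _ = ENNReal.ofReal (∫ u in Ioc 0 h, 2 ^ |p| * u ^ p) := by
        rw [ofReal_integral_eq_lintegral_ofReal hInt]
        filter_upwards [ae_restrict_mem measurableSet_Ioc] with u hu
        have := hu.1
        positivity
    _ = _ := by
        rw [← intervalIntegral.integral_of_le hh.le, intervalIntegral.integral_const_mul,
          integral_rpow (Or.inl hp), Real.zero_rpow hp1.ne']
        congr 1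
        ring

theorem rpow_split {L γ : ℝ} (hL : 0 < L) : L ^ γ = L ^ (γ - 1 / 2) * √L := by
  rw [Real.sqrt_eq_rpow, ← Real.rpow_add hL]
  congr 1
  ring

/-- The mass of the weight over the radii `t` whose height `√(1 - t²)` is within `r` of the height
`a`. If `2 r ≤ a`, the weight is comparable to a constant on a set of length at most `10 r a`;
otherwise all these heights are below `3 r` and the tail bound applies. -/
theorem lintegral_shell_le {γ : ℝ} (hγ : -1 / 2 < γ) :
    ∃ C : ℝ, 0 < C ∧ ∀ s a r : ℝ, 1 / 2 ≤ s → 0 ≤ a → s ^ 2 + a ^ 2 = 1 → 0 < r →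
      ∫⁻ t in {t : ℝ | 0 < t ∧ t < 1 ∧ |√(1 - t ^ 2) - a| < r},
          ENNReal.ofReal ((1 - t ^ 2) ^ (γ - 1 / 2)) ≤
        ENNReal.ofReal (C * (r * (a ^ 2 + r ^ 2) ^ γ)) := by
  obtain ⟨C₀, hC₀, htail⟩ := lintegral_tail_le (p := γ - 1 / 2) (by linarith)
  set p := γ - 1 / 2 with hp
  refine ⟨max (5 ^ |p| * 10) (C₀ * 9 ^ (p + 1) * 5 ^ |γ|), by positivity,
    fun s a r hs ha hsa hr => ?_⟩
  have hL : 0 < a ^ 2 + r ^ 2 := by positivity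
  have hb : ∀ t : ℝ, 0 < t → t < 1 → 0 < √(1 - t ^ 2) ∧ √(1 - t ^ 2) ^ 2 = 1 - t ^ 2 :=
    fun t h0 h1 => ⟨Real.sqrt_pos.2 (by nlinarith), Real.sq_sqrt (by nlinarith)⟩
  rcases le_or_gt (2 * r) a with har | har
  · have hsub : {t : ℝ | 0 < t ∧ t < 1 ∧ |√(1 - t ^ 2) - a| < r} ⊆
        Ioo (s - 5 * (r * a)) (s + 5 * (r * a)) := by
      rintro t ⟨h0, h1, h2⟩
      obtain ⟨hb0, hb2⟩ := hb t h0 h1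
      set b := √(1 - t ^ 2)
      -- `t` and `s` differ by `|a² - b²| / (t + s)`, where `t + s ≥ 1 / 2` and `a + b < 5 a / 2`.
      have h3 : |t - s| * (t + s) = |b - a| * (b + a) := by
        rw [← abs_of_pos (show 0 < t + s by linarith), ← abs_of_pos (show 0 < b + a by linarith),
          ← abs_mul, ← abs_mul, ← abs_neg]
        congr 1
        linear_combination hsa - hb2
      have h4 := (abs_lt.1 h2).2
      have h5 : |b - a| * (b + a) < r * (5 / 2 * a) :=
        mul_lt_mul'' h2 (by linarith) (abs_nonneg _) (by linarith)
      have h6 : |t - s| * (1 / 2) ≤ |t - s| * (t + s) := by gcongr; linarith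
      have h7 := abs_lt.1 (show |t - s| < 5 * (r * a) by linarith)
      exact ⟨by linarith, by linarith⟩
    have hms : MeasurableSet {t : ℝ | 0 < t ∧ t < 1 ∧ |√(1 - t ^ 2) - a| < r} :=
      measurableSet_Ioi.inter (measurableSet_Iio.inter
        (measurableSet_lt (f := fun t : ℝ => |√(1 - t ^ 2) - a|) (g := fun _ => r)
          (by fun_prop) (by fun_prop)))
    calc ∫⁻ t in {t : ℝ | 0 < t ∧ t < 1 ∧ |√(1 - t ^ 2) - a| < r}, ENNReal.ofReal ((1 - t ^ 2) ^ p)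
        ≤ ∫⁻ t in {t : ℝ | 0 < t ∧ t < 1 ∧ |√(1 - t ^ 2) - a| < r},
            ENNReal.ofReal (5 ^ |p| * (a ^ 2 + r ^ 2) ^ p) := by
          refine setLIntegral_mono' hms fun t ht => ?_
          obtain ⟨h0, h1, h2⟩ := ht
          obtain ⟨hb0, hb2⟩ := hb t h0 h1
          have h3 := abs_lt.1 h2
          rw [← hb2]
          exact ENNReal.ofReal_le_ofReal (rpow_le_of_comparable p (by positivity) hL
            (by norm_num) (by nlinarith) (by nlinarith))
      _ ≤ ENNReal.ofReal (5 ^ |p| * (a ^ 2 + r ^ 2) ^ p) * ENNReal.ofReal (10 * (r * a)) := by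
          rw [setLIntegral_const]
          gcongr
          refine (measure_mono hsub).trans (le_of_eq ?_)
          rw [Real.volume_Ioo]
          congr 1
          ring
      _ ≤ _ := by
          rw [← ENNReal.ofReal_mul (by positivity)]
          refine ENNReal.ofReal_le_ofReal ?_
          have h1 : a ≤ √(a ^ 2 + r ^ 2) := Real.le_sqrt_of_sq_le (by nlinarith)
          calc 5 ^ |p| * (a ^ 2 + r ^ 2) ^ p * (10 * (r * a))
              ≤ 5 ^ |p| * (a ^ 2 + r ^ 2) ^ p * (10 * (r * √(a ^ 2 + r ^ 2))) := by gcongr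
            _ = 5 ^ |p| * 10 * (r * (a ^ 2 + r ^ 2) ^ γ) := by
                rw [rpow_split (γ := γ) hL]; ring
            _ ≤ _ := by gcongr; exact le_max_left _ _
  · have hsub : {t : ℝ | 0 < t ∧ t < 1 ∧ |√(1 - t ^ 2) - a| < r} ⊆
        {t : ℝ | 0 < t ∧ t < 1 ∧ 1 - t < 9 * r ^ 2} := by
      rintro t ⟨h0, h1, h2⟩
      obtain ⟨hb0, hb2⟩ := hb t h0 h1
      have h3 := abs_lt.1 h2
      exact ⟨h0, h1, by nlinarith⟩
    calc ∫⁻ t in {t : ℝ | 0 < t ∧ t < 1 ∧ |√(1 - t ^ 2) - a| < r}, ENNReal.ofReal ((1 - t ^ 2) ^ p)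
        ≤ ENNReal.ofReal (C₀ * (9 * r ^ 2) ^ (p + 1)) :=
          (lintegral_mono_set hsub).trans (htail _ (by positivity))
      _ ≤ _ := by
          refine ENNReal.ofReal_le_ofReal ?_
          have h1 : (r ^ 2) ^ γ ≤ 5 ^ |γ| * (a ^ 2 + r ^ 2) ^ γ :=
            rpow_le_of_comparable γ (by positivity) hL (by norm_num) (by nlinarith) (by nlinarith)
          have h2 : (r ^ 2) ^ (p + 1) = r * (r ^ 2) ^ γ := by
            have h3 : (r ^ 2) ^ ((1 : ℝ) / 2) = r := by
              rw [← Real.sqrt_eq_rpow, Real.sqrt_sq hr.le]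
            rw [show p + 1 = 1 / 2 + γ by rw [hp]; ring, Real.rpow_add (by positivity), h3]
          calc C₀ * (9 * r ^ 2) ^ (p + 1) = C₀ * 9 ^ (p + 1) * (r * (r ^ 2) ^ γ) := by
                rw [Real.mul_rpow (by norm_num) (by positivity), h2]; ring
            _ ≤ C₀ * 9 ^ (p + 1) * (r * (5 ^ |γ| * (a ^ 2 + r ^ 2) ^ γ)) := by gcongr
            _ = C₀ * 9 ^ (p + 1) * 5 ^ |γ| * (r * (a ^ 2 + r ^ 2) ^ γ) := by ring
            _ ≤ _ := by gcongr; exact le_max_right _ _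

/-- The radii `t` whose height `√(1 - t²)` lies in `(a + r / 32, a + r / 16)`. -/
def innerShell (a r : ℝ) : Set ℝ :=
  Ioo √(1 - (a + r / 16) ^ 2) √(1 - (a + r / 32) ^ 2)

theorem innerShell_spec {s a r t : ℝ} (hs : 1 / 2 ≤ s) (ha : 0 ≤ a) (hsa : s ^ 2 + a ^ 2 = 1)
    (hr : 0 < r) (hr1 : r ≤ 1) (ht : t ∈ innerShell a r) :
    1 / 4 ≤ t ∧ t < 1 ∧ a + r / 32 < √(1 - t ^ 2) ∧ √(1 - t ^ 2) < a + r / 16 := by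
  have ha1 : a ≤ 7 / 8 := by nlinarith
  have ht0 : 0 ≤ t := (Real.sqrt_nonneg _).trans ht.1.le
  have h1 : 1 - (a + r / 16) ^ 2 < t ^ 2 :=
    (Real.sqrt_lt' (lt_of_le_of_lt (Real.sqrt_nonneg _) ht.1)).1 ht.1
  have h2 : t ^ 2 < 1 - (a + r / 32) ^ 2 := (Real.lt_sqrt ht0).1 ht.2
  refine ⟨by nlinarith, by nlinarith, ?_, ?_⟩
  · exact (Real.lt_sqrt (by positivity)).2 (by linarith)
  · exact (Real.sqrt_lt' (by positivity)).2 (by linarith)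

/-- The mass over `innerShell a r` is at least of order `r (a² + r²)^γ`: the set has length at least
of order `r (a + r)`, and `1 - t²` is comparable to `a² + r²` on it. -/
theorem le_lintegral_innerShell (γ : ℝ) (n : ℕ) :
    ∃ c : ℝ, 0 < c ∧ ∀ s a r : ℝ, 1 / 2 ≤ s → 0 ≤ a → s ^ 2 + a ^ 2 = 1 → 0 < r → r ≤ 1 →
      ENNReal.ofReal (c * (r * (a ^ 2 + r ^ 2) ^ γ)) ≤
        ∫⁻ t in innerShell a r,
          ENNReal.ofReal (t ^ n) * ENNReal.ofReal ((1 - t ^ 2) ^ (γ - 1 / 2)) := by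
  set p := γ - 1 / 2 with hp
  refine ⟨(1 / 4) ^ n * (1024 ^ |p|)⁻¹ * (1 / 2048), by positivity,
    fun s a r hs ha hsa hr hr1 => ?_⟩
  have hL : 0 < a ^ 2 + r ^ 2 := by positivity
  have ha1 : a ≤ 7 / 8 := by nlinarith
  set u := √(1 - (a + r / 16) ^ 2) with hu
  set w := √(1 - (a + r / 32) ^ 2) with hw
  have hu2 : u ^ 2 = 1 - (a + r / 16) ^ 2 := Real.sq_sqrt (by nlinarith)
  have hw2 : w ^ 2 = 1 - (a + r / 32) ^ 2 := Real.sq_sqrt (by nlinarith)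
  have hu0 : 0 ≤ u := Real.sqrt_nonneg _
  have hw0 : 0 ≤ w := Real.sqrt_nonneg _
  have hw1 : w ≤ 1 := by nlinarith
  have huw : u ≤ w := Real.sqrt_le_sqrt (by nlinarith)
  have hlen : r * √(a ^ 2 + r ^ 2) / 2048 ≤ w - u := by
    have h1 : √(a ^ 2 + r ^ 2) ≤ a + r := Real.sqrt_le_iff.2 ⟨by positivity, by nlinarith⟩
    have h2 : r * √(a ^ 2 + r ^ 2) ≤ r * (a + r) := by gcongr
    have h3 : (w - u) * (w + u) ≤ (w - u) * 2 := by
      gcongr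
      linarith
    nlinarith [mul_nonneg hr.le ha]
  calc ENNReal.ofReal ((1 / 4) ^ n * (1024 ^ |p|)⁻¹ * (1 / 2048) * (r * (a ^ 2 + r ^ 2) ^ γ))
      = ENNReal.ofReal ((1 / 4) ^ n * ((1024 ^ |p|)⁻¹ * (a ^ 2 + r ^ 2) ^ p)) *
          ENNReal.ofReal (r * √(a ^ 2 + r ^ 2) / 2048) := by
        rw [← ENNReal.ofReal_mul (by positivity), rpow_split (γ := γ) hL]
        congr 1
        ring
    _ ≤ ENNReal.ofReal ((1 / 4) ^ n * ((1024 ^ |p|)⁻¹ * (a ^ 2 + r ^ 2) ^ p)) *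
          ENNReal.ofReal (w - u) := by gcongr
    _ = ∫⁻ t in innerShell a r,
          ENNReal.ofReal ((1 / 4) ^ n * ((1024 ^ |p|)⁻¹ * (a ^ 2 + r ^ 2) ^ p)) := by
        rw [setLIntegral_const, innerShell, Real.volume_Ioo]
    _ ≤ _ := by
        refine setLIntegral_mono' measurableSet_Ioo fun t ht => ?_
        obtain ⟨h1, h2, h3, h4⟩ := innerShell_spec hs ha hsa hr hr1 ht
        have ht0 : 0 < 1 - t ^ 2 := by
          have := mul_pos (sub_pos.2 h2) (show 0 < 1 + t by linarith)
          linarith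
        have hb2 : √(1 - t ^ 2) ^ 2 = 1 - t ^ 2 := Real.sq_sqrt ht0.le
        rw [← ENNReal.ofReal_mul (by positivity)]
        refine ENNReal.ofReal_le_ofReal ?_
        have h5 : (a ^ 2 + r ^ 2) ^ p ≤ 1024 ^ |p| * (1 - t ^ 2) ^ p := by
          have h6 : (a + r / 32) ^ 2 ≤ √(1 - t ^ 2) ^ 2 := by gcongr
          have h7 : √(1 - t ^ 2) ^ 2 ≤ (a + r / 16) ^ 2 := by gcongr
          have h8 := mul_nonneg hr.le ha
          have h9 := sq_nonneg (a - r)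
          have h10 := sq_nonneg a
          have h11 := sq_nonneg r
          rw [hb2] at h6 h7
          exact rpow_le_of_comparable p hL ht0 (by norm_num) (by linarith) (by linarith)
        gcongr
        rwa [inv_mul_le_iff₀ (by positivity)]

theorem measurable_weight (p : ℝ) : Measurable fun t : ℝ => ENNReal.ofReal ((1 - t ^ 2) ^ p) :=
  ((measurable_const.sub (measurable_id.pow_const 2)).pow_const p).ennreal_ofReal

theorem weight_pos {m : ℕ} {x : EuclideanSpace ℝ (Fin m)} (hx : ‖x‖ < 1) : 0 < 1 - ‖x‖ ^ 2 := by
  nlinarith [norm_nonneg x]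

/-- A small chord forces both the base points and the heights to be close. -/
theorem abs_sqrt_sub_lt_of_chordSq_lt {m : ℕ} {x y : EuclideanSpace ℝ (Fin m)} {r : ℝ}
    (hr : 0 < r) (h : chordSq x y < r ^ 2) :
    ‖x - y‖ < r ∧ |√(1 - ‖y‖ ^ 2) - √(1 - ‖x‖ ^ 2)| < r := by
  unfold chordSq at h
  constructor
  · exact lt_of_pow_lt_pow_left₀ 2 hr.le
      (by linarith [sq_nonneg (√(1 - ‖x‖ ^ 2) - √(1 - ‖y‖ ^ 2))])
  · rw [abs_sub_comm]
    exact abs_lt_of_sq_lt_sq (by linarith [sq_nonneg ‖x - y‖]) hr.le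

/-! ### Centres far from the origin -/

/-- Away from the centre, the `ρ`-ball lies in a cone of aperture `4 r` over the radii whose height
is within `r` of that of `x`. -/
theorem upper_of_half_le {m : ℕ} (hm : 1 ≤ m) {γ : ℝ} (hγ : -1 / 2 < γ) :
    ∃ C : ℝ, 0 < C ∧ ∀ x : EuclideanSpace ℝ (Fin m), ‖x‖ < 1 → 1 / 2 ≤ ‖x‖ →
      ∀ r : ℝ, 0 < r → r ≤ 1 →
        weightedBallMeasure m γ {y | ‖y‖ < 1 ∧ ballDist x y < r} ≤
          ENNReal.ofReal (C * (r ^ m * (1 - ‖x‖ ^ 2 + r ^ 2) ^ γ)) := by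
  obtain ⟨C₁, hC₁, hcap⟩ := capMeasure_le hm
  obtain ⟨C₂, hC₂, hshell⟩ := lintegral_shell_le hγ
  refine ⟨C₁ * 4 ^ (m - 1) * C₂, by positivity, fun x hx hx2 r hr hr1 => ?_⟩
  have ha0 := weight_pos hx
  set a := √(1 - ‖x‖ ^ 2) with ha
  have ha2 : a ^ 2 = 1 - ‖x‖ ^ 2 := Real.sq_sqrt ha0.le
  set T : Set ℝ := {t | t < 1 ∧ |√(1 - t ^ 2) - a| < r} with hT
  have hTm : MeasurableSet T :=
    measurableSet_Iio.inter (measurableSet_lt (f := fun t : ℝ => |√(1 - t ^ 2) - a|)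
      (g := fun _ => r) (by fun_prop) (by fun_prop))
  have hsub : {y | ‖y‖ < 1 ∧ ballDist x y < r} ⊆
      dirCone (‖x‖⁻¹ • x) (4 * r) ∩ {y | ‖y‖ ∈ T} := by
    rintro y ⟨hy, hyr⟩
    obtain ⟨h1, h2⟩ := abs_sqrt_sub_lt_of_chordSq_lt hr (chordSq_lt_of_ballDist_lt hx hy hr hr1 hyr)
    refine ⟨?_, hy, h2⟩
    have h3 := norm_normalize_sub_le y x
    have h4 : 1 / 2 * ‖‖y‖⁻¹ • y - ‖x‖⁻¹ • x‖ ≤ ‖x‖ * ‖‖y‖⁻¹ • y - ‖x‖⁻¹ • x‖ := by gcongr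
    change ‖‖y‖⁻¹ • y - ‖x‖⁻¹ • x‖ < 4 * r
    linarith
  have hTsub : T ∩ Ioi 0 = {t : ℝ | 0 < t ∧ t < 1 ∧ |√(1 - t ^ 2) - a| < r} := by
    ext t
    simp only [hT, mem_inter_iff, mem_ofPred_eq, mem_Ioi]
    tauto
  rw [weightedBallMeasure_apply γ fun y hy => hy.1]
  calc ∫⁻ y in {y | ‖y‖ < 1 ∧ ballDist x y < r}, ENNReal.ofReal ((1 - ‖y‖ ^ 2) ^ (γ - 1 / 2))
      ≤ ∫⁻ y in dirCone (‖x‖⁻¹ • x) (4 * r) ∩ {y | ‖y‖ ∈ T},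
          ENNReal.ofReal ((1 - ‖y‖ ^ 2) ^ (γ - 1 / 2)) := lintegral_mono_set hsub
    _ = capMeasure (‖x‖⁻¹ • x) (4 * r) * ∫⁻ t in T ∩ Ioi 0,
          ENNReal.ofReal (t ^ (m - 1)) * ENNReal.ofReal ((1 - t ^ 2) ^ (γ - 1 / 2)) :=
        setLIntegral_dirCone_inter hm _ _ (measurable_weight _) hTm
    _ ≤ ENNReal.ofReal (C₁ * (4 * r) ^ (m - 1)) *
          ENNReal.ofReal (C₂ * (r * (a ^ 2 + r ^ 2) ^ γ)) := by
        refine mul_le_mul' (hcap _ _ (by positivity)) (le_trans ?_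
          (hshell ‖x‖ a r hx2 (Real.sqrt_nonneg _) (by linarith) hr))
        rw [← hTsub]
        refine setLIntegral_mono' (hTm.inter measurableSet_Ioi) fun t ht => ?_
        refine mul_le_of_le_one_left zero_le ?_
        rw [ENNReal.ofReal_le_one]
        exact pow_le_one₀ (le_of_lt ht.2) ht.1.1.le
    _ = _ := by
        rw [← ENNReal.ofReal_mul (by positivity), ha2]
        congr 1
        obtain ⟨k, rfl⟩ := Nat.exists_eq_add_of_le' hm
        simp only [Nat.add_sub_cancel]
        ring

/-- Away from the centre, the `ρ`-ball contains the part of the cone of aperture `r / 8` around `x`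
over the radii in `innerShell`. -/
theorem lower_of_half_le {m : ℕ} (hm : 1 ≤ m) (γ : ℝ) :
    ∃ c : ℝ, 0 < c ∧ ∀ x : EuclideanSpace ℝ (Fin m), ‖x‖ < 1 → 1 / 2 ≤ ‖x‖ →
      ∀ r : ℝ, 0 < r → r ≤ 1 →
        ENNReal.ofReal (c * (r ^ m * (1 - ‖x‖ ^ 2 + r ^ 2) ^ γ)) ≤
          weightedBallMeasure m γ {y | ‖y‖ < 1 ∧ ballDist x y < r} := by
  obtain ⟨c₁, hc₁, hcap⟩ := le_capMeasure hm
  obtain ⟨c₂, hc₂, hshell⟩ := le_lintegral_innerShell γ (m - 1)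
  refine ⟨c₁ * (1 / 8) ^ (m - 1) * c₂, by positivity, fun x hx hx2 r hr hr1 => ?_⟩
  have ha0 := weight_pos hx
  have hx0 : 0 < ‖x‖ := by linarith
  set a := √(1 - ‖x‖ ^ 2) with ha
  have han : 0 ≤ a := Real.sqrt_nonneg _
  have ha2 : a ^ 2 = 1 - ‖x‖ ^ 2 := Real.sq_sqrt ha0.le
  have hsub : dirCone (‖x‖⁻¹ • x) (r / 8) ∩ {y | ‖y‖ ∈ innerShell a r} ⊆
      {y | ‖y‖ < 1 ∧ ballDist x y < r} := by
    rintro y ⟨hy, hyT⟩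
    obtain ⟨h1, h2, h3, h4⟩ := innerShell_spec hx2 han (by linarith) hr hr1 hyT
    refine ⟨h2, ballDist_lt_of_chordSq_le hx h2 hr hr1 ?_⟩
    have hy' : ‖‖y‖⁻¹ • y - ‖x‖⁻¹ • x‖ < r / 8 := hy
    have hy0 : 0 < ‖y‖ := by linarith
    have hb2 : √(1 - ‖y‖ ^ 2) ^ 2 = 1 - ‖y‖ ^ 2 := Real.sq_sqrt (weight_pos h2).le
    rw [chordSq, ← ha]
    have hb1 : √(1 - ‖y‖ ^ 2) ≤ 1 := Real.sqrt_le_one.2 (by nlinarith)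
    set b := √(1 - ‖y‖ ^ 2)
    -- The radii differ by `(b² - a²) / (‖x‖ + ‖y‖)`.
    have h5 : |‖y‖ - ‖x‖| ≤ r / 4 := by
      have h6 : (‖x‖ - ‖y‖) * (‖x‖ + ‖y‖) = (b - a) * (b + a) := by linear_combination ha2 - hb2
      have h7 : (b - a) * (b + a) ≤ r / 16 * 2 := by
        apply mul_le_mul <;> linarith
      have h8 : 0 ≤ ‖x‖ - ‖y‖ := by
        by_contra! hneg
        nlinarith
      rw [abs_sub_comm, abs_of_nonneg h8]
      nlinarith
    have h6 : ‖x - y‖ ≤ |‖y‖ - ‖x‖| + ‖‖y‖⁻¹ • y - ‖x‖⁻¹ • x‖ := by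
      have e : x - y = (‖x‖ - ‖y‖) • (‖y‖⁻¹ • y) - ‖x‖ • (‖y‖⁻¹ • y - ‖x‖⁻¹ • x) := by
        rw [smul_sub, sub_smul, smul_smul ‖x‖ ‖x‖⁻¹, smul_smul ‖y‖ ‖y‖⁻¹,
          mul_inv_cancel₀ hx0.ne', mul_inv_cancel₀ hy0.ne', one_smul, one_smul]
        abel
      calc ‖x - y‖ ≤ ‖(‖x‖ - ‖y‖) • (‖y‖⁻¹ • y)‖ + ‖‖x‖ • (‖y‖⁻¹ • y - ‖x‖⁻¹ • x)‖ := by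
            rw [e]; exact norm_sub_le _ _
        _ = |‖y‖ - ‖x‖| + ‖x‖ * ‖‖y‖⁻¹ • y - ‖x‖⁻¹ • x‖ := by
            rw [norm_smul, norm_smul, norm_smul ‖x‖, norm_inv, norm_norm, norm_norm,
              inv_mul_cancel₀ hy0.ne', mul_one, Real.norm_eq_abs, abs_sub_comm]
        _ ≤ _ := by
            gcongr
            exact mul_le_of_le_one_left (norm_nonneg _) hx.le
    have h7 : ‖x - y‖ ^ 2 ≤ (3 / 8 * r) ^ 2 :=
      pow_le_pow_left₀ (norm_nonneg _) (by linarith) 2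
    have h8 : (b - a) ^ 2 ≤ (r / 16) ^ 2 := pow_le_pow_left₀ (by linarith) (by linarith) 2
    nlinarith
  rw [weightedBallMeasure_apply γ fun y hy => hy.1]
  calc ENNReal.ofReal (c₁ * (1 / 8) ^ (m - 1) * c₂ * (r ^ m * (1 - ‖x‖ ^ 2 + r ^ 2) ^ γ))
      = ENNReal.ofReal (c₁ * (r / 8) ^ (m - 1)) *
          ENNReal.ofReal (c₂ * (r * (a ^ 2 + r ^ 2) ^ γ)) := by
        rw [← ENNReal.ofReal_mul (by positivity), ha2]
        congr 1
        obtain ⟨k, rfl⟩ := Nat.exists_eq_add_of_le' hm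
        simp only [Nat.add_sub_cancel]
        ring
    _ ≤ capMeasure (‖x‖⁻¹ • x) (r / 8) * ∫⁻ t in innerShell a r ∩ Ioi 0,
          ENNReal.ofReal (t ^ (m - 1)) * ENNReal.ofReal ((1 - t ^ 2) ^ (γ - 1 / 2)) := by
        rw [inter_eq_left.2 (show innerShell a r ⊆ Ioi 0 from
          fun t ht => (Real.sqrt_nonneg _).trans_lt ht.1)]
        refine mul_le_mul' (hcap _ _ ?_ (by positivity) (by linarith))
          (hshell ‖x‖ a r hx2 han (by linarith) hr hr1)
        rw [norm_smul, norm_inv, norm_norm, inv_mul_cancel₀ hx0.ne']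
    _ = ∫⁻ y in dirCone (‖x‖⁻¹ • x) (r / 8) ∩ {y | ‖y‖ ∈ innerShell a r},
          ENNReal.ofReal ((1 - ‖y‖ ^ 2) ^ (γ - 1 / 2)) :=
        (setLIntegral_dirCone_inter hm _ _ (measurable_weight _) measurableSet_Ioo).symm
    _ ≤ _ := lintegral_mono_set hsub

/-! ### Centres near the origin -/

theorem weightedBallMeasure_ball_lt_top {m : ℕ} (hm : 1 ≤ m) {γ : ℝ} (hγ : -1 / 2 < γ) :
    weightedBallMeasure m γ {y | ‖y‖ < 1} < ∞ := by
  obtain ⟨C₁, hC₁, hcap⟩ := capMeasure_le hm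
  obtain ⟨C₂, hC₂, htail⟩ := lintegral_tail_le (p := γ - 1 / 2) (by linarith)
  have hsub : {y : EuclideanSpace ℝ (Fin m) | ‖y‖ < 1} ⊆ dirCone 0 2 ∩ {y | ‖y‖ ∈ Iio 1} := by
    intro y hy
    refine ⟨?_, hy⟩
    change ‖‖y‖⁻¹ • y - 0‖ < 2
    rw [sub_zero, norm_smul, norm_inv, norm_norm]
    exact inv_mul_le_one.trans_lt (by norm_num)
  rw [weightedBallMeasure_apply γ subset_rfl]
  calc ∫⁻ y : EuclideanSpace ℝ (Fin m) in {y | ‖y‖ < 1}, ENNReal.ofReal ((1 - ‖y‖ ^ 2) ^ (γ - 1 / 2))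
      ≤ ∫⁻ y : EuclideanSpace ℝ (Fin m) in dirCone 0 2 ∩ {y | ‖y‖ ∈ Iio 1},
          ENNReal.ofReal ((1 - ‖y‖ ^ 2) ^ (γ - 1 / 2)) := lintegral_mono_set hsub
    _ = capMeasure (0 : EuclideanSpace ℝ (Fin m)) 2 * ∫⁻ t in Iio 1 ∩ Ioi 0,
          ENNReal.ofReal (t ^ (m - 1)) * ENNReal.ofReal ((1 - t ^ 2) ^ (γ - 1 / 2)) :=
        setLIntegral_dirCone_inter hm _ _ (measurable_weight _) measurableSet_Iio
    _ ≤ ENNReal.ofReal (C₁ * 2 ^ (m - 1)) * ENNReal.ofReal (C₂ * 1 ^ (γ - 1 / 2 + 1)) := by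
        refine mul_le_mul' (hcap _ _ (by positivity)) (le_trans ?_ (htail 1 one_pos))
        have e : {t : ℝ | 0 < t ∧ t < 1 ∧ 1 - t < 1} = Iio 1 ∩ Ioi 0 := by
          ext t
          simp only [mem_inter_iff, mem_ofPred_eq, mem_Ioi, mem_Iio]
          constructor
          · rintro ⟨h1, h2, -⟩
            exact ⟨h2, h1⟩
          · rintro ⟨h1, h2⟩
            exact ⟨h2, h1, by linarith⟩
        rw [e]
        refine setLIntegral_mono' (measurableSet_Iio.inter measurableSet_Ioi) fun t ht => ?_
        refine mul_le_of_le_one_left zero_le ?_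
        rw [ENNReal.ofReal_le_one]
        exact pow_le_one₀ (le_of_lt ht.2) (le_of_lt ht.1)
    _ < ∞ := ENNReal.mul_lt_top ENNReal.ofReal_lt_top ENNReal.ofReal_lt_top

/-- Near the centre the weight is bounded on the Euclidean ball of radius `r` if `r ≤ 1 / 4`; for
larger `r` the total mass is an adequate bound. -/
theorem upper_of_lt_half {m : ℕ} (hm : 1 ≤ m) {γ : ℝ} (hγ : -1 / 2 < γ) :
    ∃ C : ℝ, 0 < C ∧ ∀ x : EuclideanSpace ℝ (Fin m), ‖x‖ < 1 / 2 →
      ∀ r : ℝ, 0 < r → r ≤ 1 →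
        weightedBallMeasure m γ {y | ‖y‖ < 1 ∧ ballDist x y < r} ≤
          ENNReal.ofReal (C * (r ^ m * (1 - ‖x‖ ^ 2 + r ^ 2) ^ γ)) := by
  set v := volume.real (Metric.ball (0 : EuclideanSpace ℝ (Fin m)) 1) with hv
  have hv0 : 0 < v := volume_real_ball_pos m
  set M := (weightedBallMeasure m γ {y | ‖y‖ < 1}).toReal with hM
  set p := γ - 1 / 2 with hp
  refine ⟨max (4 ^ |p| * v * 2 ^ |γ|) (M * 4 ^ m * 2 ^ |γ|), by positivity,
    fun x hx r hr hr1 => ?_⟩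
  have hxn := norm_nonneg x
  have hL1 : 3 / 4 ≤ 1 - ‖x‖ ^ 2 + r ^ 2 := by nlinarith
  have hL2 : 1 - ‖x‖ ^ 2 + r ^ 2 ≤ 2 := by nlinarith
  have hL : 1 ≤ 2 ^ |γ| * (1 - ‖x‖ ^ 2 + r ^ 2) ^ γ := by
    have := rpow_le_of_comparable (u := 1) (v := 1 - ‖x‖ ^ 2 + r ^ 2) (K := 2) γ one_pos
      (by linarith) (by norm_num) (by linarith) (by linarith)
    rwa [Real.one_rpow] at this
  have hL0 : 0 < (1 - ‖x‖ ^ 2 + r ^ 2) ^ γ := Real.rpow_pos_of_pos (by linarith) _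
  rcases le_or_gt r (1 / 4) with hr4 | hr4
  · have hsub : {y | ‖y‖ < 1 ∧ ballDist x y < r} ⊆ Metric.ball x r := by
      rintro y ⟨hy, hyr⟩
      rw [Metric.mem_ball', dist_eq_norm]
      exact (abs_sqrt_sub_lt_of_chordSq_lt hr
        (chordSq_lt_of_ballDist_lt (by linarith) hy hr hr1 hyr)).1
    rw [weightedBallMeasure_apply γ fun y hy => hy.1]
    calc ∫⁻ y in {y | ‖y‖ < 1 ∧ ballDist x y < r}, ENNReal.ofReal ((1 - ‖y‖ ^ 2) ^ p)
        ≤ ∫⁻ y in Metric.ball x r, ENNReal.ofReal ((1 - ‖y‖ ^ 2) ^ p) := lintegral_mono_set hsub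
      _ ≤ ∫⁻ y in Metric.ball x r, ENNReal.ofReal (4 ^ |p|) := by
          refine setLIntegral_mono' measurableSet_ball fun y hy => ?_
          rw [Metric.mem_ball, dist_eq_norm] at hy
          have h1 : ‖y‖ < 3 / 4 := by
            have := norm_sub_norm_le y x
            linarith
          have h2 := norm_nonneg y
          have := rpow_le_of_comparable (u := 1 - ‖y‖ ^ 2) (v := 1) (K := 4) p
            (by nlinarith) one_pos (by norm_num) (by nlinarith) (by nlinarith)
          rw [Real.one_rpow, mul_one] at this
          exact ENNReal.ofReal_le_ofReal this
      _ = ENNReal.ofReal (4 ^ |p| * (v * r ^ m)) := by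
          rw [setLIntegral_const, volume_ball_eq _ hr, ← ENNReal.ofReal_mul (by positivity)]
      _ ≤ _ := by
          refine ENNReal.ofReal_le_ofReal ?_
          calc 4 ^ |p| * (v * r ^ m) = 4 ^ |p| * (v * r ^ m) * 1 := (mul_one _).symm
            _ ≤ 4 ^ |p| * (v * r ^ m) * (2 ^ |γ| * (1 - ‖x‖ ^ 2 + r ^ 2) ^ γ) := by gcongr
            _ = 4 ^ |p| * v * 2 ^ |γ| * (r ^ m * (1 - ‖x‖ ^ 2 + r ^ 2) ^ γ) := by ring
            _ ≤ _ := by gcongr; exact le_max_left _ _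
  · calc weightedBallMeasure m γ {y | ‖y‖ < 1 ∧ ballDist x y < r}
        ≤ weightedBallMeasure m γ {y | ‖y‖ < 1} := measure_mono fun y hy => hy.1
      _ = ENNReal.ofReal M := (ENNReal.ofReal_toReal (weightedBallMeasure_ball_lt_top hm hγ).ne).symm
      _ ≤ _ := by
          refine ENNReal.ofReal_le_ofReal ?_
          have h1 : 1 ≤ (4 * r) ^ m := one_le_pow₀ (by linarith)
          have hM0 : 0 ≤ M := ENNReal.toReal_nonneg
          calc M = M * (1 * 1) := by ring
            _ ≤ M * ((4 * r) ^ m * (2 ^ |γ| * (1 - ‖x‖ ^ 2 + r ^ 2) ^ γ)) := by gcongr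
            _ = M * 4 ^ m * 2 ^ |γ| * (r ^ m * (1 - ‖x‖ ^ 2 + r ^ 2) ^ γ) := by
                rw [mul_pow]; ring
            _ ≤ _ := by gcongr; exact le_max_right _ _

/-- Near the centre, the `ρ`-ball contains a Euclidean ball of radius `r / 8` on which the weight is
bounded below. -/
theorem lower_of_lt_half (m : ℕ) (γ : ℝ) :
    ∃ c : ℝ, 0 < c ∧ ∀ x : EuclideanSpace ℝ (Fin m), ‖x‖ < 1 / 2 →
      ∀ r : ℝ, 0 < r → r ≤ 1 →
        ENNReal.ofReal (c * (r ^ m * (1 - ‖x‖ ^ 2 + r ^ 2) ^ γ)) ≤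
          weightedBallMeasure m γ {y | ‖y‖ < 1 ∧ ballDist x y < r} := by
  set v := volume.real (Metric.ball (0 : EuclideanSpace ℝ (Fin m)) 1) with hv
  have hv0 : 0 < v := volume_real_ball_pos m
  set p := γ - 1 / 2 with hp
  refine ⟨(4 ^ |p|)⁻¹ * v * (1 / 8) ^ m * (2 ^ |γ|)⁻¹, by positivity, fun x hx r hr hr1 => ?_⟩
  have hxn := norm_nonneg x
  have hx1 : ‖x‖ < 1 := by linarith
  have hL1 : 3 / 4 ≤ 1 - ‖x‖ ^ 2 + r ^ 2 := by nlinarith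
  have hL2 : 1 - ‖x‖ ^ 2 + r ^ 2 ≤ 2 := by nlinarith
  have hL : (1 - ‖x‖ ^ 2 + r ^ 2) ^ γ ≤ 2 ^ |γ| := by
    have := rpow_le_of_comparable (v := 1) (u := 1 - ‖x‖ ^ 2 + r ^ 2) (K := 2) γ
      (by linarith) one_pos (by norm_num) (by linarith) (by linarith)
    rwa [Real.one_rpow, mul_one] at this
  have hy58 : ∀ y ∈ Metric.ball x (r / 8), ‖y‖ < 5 / 8 := fun y hy => by
    rw [Metric.mem_ball, dist_eq_norm] at hy
    linarith [norm_sub_norm_le y x]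
  have hsub : Metric.ball x (r / 8) ⊆ {y | ‖y‖ < 1 ∧ ballDist x y < r} := by
    intro y hy
    have h1 := hy58 y hy
    have h2 := norm_nonneg y
    have hy1 : ‖y‖ < 1 := by linarith
    rw [Metric.mem_ball', dist_eq_norm] at hy
    refine ⟨hy1, ballDist_lt_of_chordSq_le hx1 hy1 hr hr1 ?_⟩
    have ha2 : √(1 - ‖x‖ ^ 2) ^ 2 = 1 - ‖x‖ ^ 2 := Real.sq_sqrt (weight_pos hx1).le
    have hb2 : √(1 - ‖y‖ ^ 2) ^ 2 = 1 - ‖y‖ ^ 2 := Real.sq_sqrt (weight_pos hy1).le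
    have ha : 1 / 2 ≤ √(1 - ‖x‖ ^ 2) := Real.le_sqrt_of_sq_le (by nlinarith)
    have hb : 1 / 2 ≤ √(1 - ‖y‖ ^ 2) := Real.le_sqrt_of_sq_le (by nlinarith)
    rw [chordSq]
    set a := √(1 - ‖x‖ ^ 2)
    set b := √(1 - ‖y‖ ^ 2)
    have h3 : |a - b| * (a + b) = |‖x‖ - ‖y‖| * (‖x‖ + ‖y‖) := by
      rw [← abs_of_nonneg (show 0 ≤ a + b by linarith),
        ← abs_of_nonneg (show 0 ≤ ‖x‖ + ‖y‖ by linarith), ← abs_mul, ← abs_mul, ← abs_neg]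
      congr 1
      linear_combination hb2 - ha2
    have h4 : |‖x‖ - ‖y‖| * (‖x‖ + ‖y‖) ≤ r / 8 * 2 :=
      mul_le_mul ((abs_norm_sub_norm_le x y).trans hy.le) (by linarith) (by linarith)
        (by linarith)
    have h5 : |a - b| * 1 ≤ |a - b| * (a + b) := by gcongr; linarith
    have h6 : |a - b| ^ 2 ≤ (r / 4) ^ 2 := pow_le_pow_left₀ (abs_nonneg _) (by linarith) 2
    rw [sq_abs] at h6
    have h7 : ‖x - y‖ ^ 2 ≤ (r / 8) ^ 2 := pow_le_pow_left₀ (norm_nonneg _) hy.le 2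
    nlinarith
  rw [weightedBallMeasure_apply γ fun y hy => hy.1]
  calc ENNReal.ofReal ((4 ^ |p|)⁻¹ * v * (1 / 8) ^ m * (2 ^ |γ|)⁻¹ *
        (r ^ m * (1 - ‖x‖ ^ 2 + r ^ 2) ^ γ))
      ≤ ENNReal.ofReal ((4 ^ |p|)⁻¹ * v * (1 / 8) ^ m * (2 ^ |γ|)⁻¹ * (r ^ m * 2 ^ |γ|)) := by
        gcongr
    _ = ENNReal.ofReal ((4 ^ |p|)⁻¹ * (v * (r / 8) ^ m)) := by
        congr 1
        rw [div_eq_mul_one_div r 8, mul_pow]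
        field_simp
    _ = ∫⁻ y in Metric.ball x (r / 8), ENNReal.ofReal ((4 ^ |p|)⁻¹) := by
        rw [setLIntegral_const, volume_ball_eq _ (by positivity),
          ← ENNReal.ofReal_mul (by positivity)]
    _ ≤ ∫⁻ y in Metric.ball x (r / 8), ENNReal.ofReal ((1 - ‖y‖ ^ 2) ^ p) := by
        refine setLIntegral_mono' measurableSet_ball fun y hy => ?_
        have h1 := hy58 y hy
        have h2 := norm_nonneg y
        have := rpow_le_of_comparable (u := 1) (v := 1 - ‖y‖ ^ 2) (K := 4) p one_pos
          (by nlinarith) (by norm_num) (by nlinarith) (by nlinarith)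
        rw [Real.one_rpow] at this
        refine ENNReal.ofReal_le_ofReal ?_
        rwa [inv_le_iff_one_le_mul₀' (by positivity)]
    _ ≤ _ := lintegral_mono_set hsub

/-! ### The ball estimate -/

/-- On the open unit ball `B^m ⊂ ℝ^m` with `γ > -1/2`, the measure
`dμ = (1-‖x‖²)^{γ-1/2} dx` and the distance `ρ` above, there is a constant `c > 1`
depending only on `m, γ` with
`c⁻¹ r^m (1-‖x‖²+r²)^γ ≤ μ(B(x,r)) ≤ c r^m (1-‖x‖²+r²)^γ`
for all `x` with `‖x‖ < 1` and all `0 < r ≤ 1`. -/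
theorem weighted_ball_ball_measure (m : ℕ) (hm : 1 ≤ m) (γ : ℝ) (hγ : -1 / 2 < γ) :
    ∃ c : ℝ, 1 < c ∧
      ∀ x : EuclideanSpace ℝ (Fin m), ‖x‖ < 1 → ∀ r : ℝ, 0 < r → r ≤ 1 →
        ENNReal.ofReal (c⁻¹ * r ^ m * (1 - ‖x‖ ^ 2 + r ^ 2) ^ γ) ≤
            weightedBallMeasure m γ {y | ‖y‖ < 1 ∧ ballDist x y < r} ∧
          weightedBallMeasure m γ {y | ‖y‖ < 1 ∧ ballDist x y < r} ≤
            ENNReal.ofReal (c * r ^ m * (1 - ‖x‖ ^ 2 + r ^ 2) ^ γ) := by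
  obtain ⟨C₁, hC₁, hu₁⟩ := upper_of_half_le hm hγ
  obtain ⟨C₂, hC₂, hu₂⟩ := upper_of_lt_half hm hγ
  obtain ⟨c₁, hc₁, hl₁⟩ := lower_of_half_le hm γ
  obtain ⟨c₂, hc₂, hl₂⟩ := lower_of_lt_half m γ
  have hi₁ : 0 < c₁⁻¹ := inv_pos.2 hc₁
  have hi₂ : 0 < c₂⁻¹ := inv_pos.2 hc₂
  set c := 1 + C₁ + C₂ + c₁⁻¹ + c₂⁻¹ with hc
  refine ⟨c, by linarith, fun x hx r hr hr1 => ?_⟩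
  have hL0 : 0 ≤ (1 - ‖x‖ ^ 2 + r ^ 2) ^ γ :=
    Real.rpow_nonneg (by nlinarith [weight_pos hx]) _
  have hlow : ∀ d : ℝ, 0 < d → d⁻¹ ≤ c → ENNReal.ofReal (c⁻¹ * r ^ m * (1 - ‖x‖ ^ 2 + r ^ 2) ^ γ) ≤
      ENNReal.ofReal (d * (r ^ m * (1 - ‖x‖ ^ 2 + r ^ 2) ^ γ)) := fun d hd hdc => by
    rw [mul_assoc]
    have : c⁻¹ ≤ d := inv_le_of_inv_le₀ hd hdc
    gcongr
  have hup : ∀ d : ℝ, d ≤ c → ENNReal.ofReal (d * (r ^ m * (1 - ‖x‖ ^ 2 + r ^ 2) ^ γ)) ≤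
      ENNReal.ofReal (c * r ^ m * (1 - ‖x‖ ^ 2 + r ^ 2) ^ γ) := fun d hdc => by
    rw [mul_assoc]
    gcongr
  rcases le_or_gt (1 / 2) ‖x‖ with h | h
  · exact ⟨(hlow c₁ hc₁ (by linarith)).trans (hl₁ x hx h r hr hr1),
      (hu₁ x hx h r hr hr1).trans (hup C₁ (by linarith))⟩
  · exact ⟨(hlow c₂ hc₂ (by linarith)).trans (hl₂ x h r hr hr1),
      (hu₂ x h r hr hr1).trans (hup C₂ (by linarith))⟩
end
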